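/- arXiv:2111.08199 — 3 statements merged into one kernel-verified Lean document; each statement's English description precedes it below -/
import Mathlib

section
/- Let H be a compact metrizable space, let n ≥ 1, and let v_1, …, v_{n+1} be n+1 distinct points of H. Let (X_1,d_1), …, (X_{n+1},d_{n+1}) be compact connected metric spaces with d_GH((X_i,d_i),(X_j,d_j)) > 0 for all distinct i, j. Then there exists a topological embedding Φ : H → 𝒞 (into the Gromov–Hausdorff space) such that Φ(v_i) = (X_i,d_i) for every i = 1, …, n+1. -/
open GromovHausdorff

/-!
Since `H` embeds into the Hilbert cube `Iᴺ`, it suffices to treat the cube. On the product of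
the `X i` and of a second Hilbert cube, consider the pseudometrics
`∑ i, (l i * d(x i, y i) + b 0 * √d(x i, y i)) + ∑ j, 2⁻ʲ * b j * |u j - w j| ^ e j`
with `1 ≥ e 0 > e 1 > ⋯ > 1 / 2`. Their metric quotients depend continuously on the weights
`(l, b)`. If `b 0 ≠ 0`, then along an `e k`-Hölder path the points of the `X i` and the cube
coordinates `j > k` are Hölder of exponent greater than `1`, hence constant. So the largest
distance between the endpoints of such paths is `∑ j ≤ k, 2⁻ʲ * b j`, and therefore `b` is an
isometry invariant.

Let `l (v i)` be the `i`-th basis vector and `b(u) = (s, s * u 0, s * u 1, …)` with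
`s = t * r u`, where `r` vanishes exactly at the points `v i`. Then `v i` is sent to `X i`, and
elsewhere `b` recovers both `u` and `t`. In particular each `X i` is hit outside the points `v j`
for at most one `t ≠ 0`, so for some `t` this never happens.
-/

namespace GHEmbedding

open Function Set Topology TopologicalSpace unitInterval
open scoped NNReal ENNReal

section HolderPaths

theorem dimH_unitInterval : dimH (univ : Set I) = 1 := by
  rw [← isometry_subtype_coe.dimH_image, image_univ, Subtype.range_coe, unitInterval,
    ← segment_eq_Icc zero_le_one, Real.dimH_segment zero_ne_one]

theorem eq_of_holderWith_of_dimH_lt {T Y : Type*} [EMetricSpace T] [PreconnectedSpace T]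
    [MetricSpace Y] {f : T → Y} {C r : ℝ≥0} (hf : HolderWith C r f)
    (hr : dimH (univ : Set T) < r) (s t : T) : f s = f t := by
  by_contra hst
  have hr₀ : 0 < r := ENNReal.coe_pos.1 (zero_le.trans_lt hr)
  let g : T → ℝ := fun u => dist (f u) (f s)
  have hg : HolderWith C r g := by
    have h := (LipschitzWith.dist_left (f s)).holderWith.comp hf
    simp only [NNReal.coe_one, NNReal.rpow_one, one_mul] at h
    exact h
  have hsub : segment ℝ 0 (g t) ⊆ range g := by
    rw [segment_eq_Icc dist_nonneg]
    exact (isPreconnected_range (hg.continuous hr₀)).ordConnected.out ⟨s, dist_self _⟩ ⟨t, rfl⟩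
  have hdim : 1 ≤ dimH (univ : Set T) / r :=
    calc 1 = dimH (segment ℝ 0 (g t)) := (Real.dimH_segment (dist_pos.2 (Ne.symm hst)).ne).symm
      _ ≤ dimH (range g) := dimH_mono hsub
      _ ≤ dimH (univ : Set T) / r := hg.dimH_range_le hr₀
  exact hdim.not_gt (ENNReal.div_lt_of_lt_mul' (by simpa using hr))

/-- The distances between the endpoints of the `e`-Hölder paths of a space, an isometry
invariant. -/
def holderSpan (Z : Type*) [PseudoMetricSpace Z] (e : ℝ≥0) : Set ℝ :=
  {d | ∃ γ : I → Z, (∃ C, HolderWith C e γ) ∧ dist (γ 0) (γ 1) = d}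

theorem holderSpan_eq_of_isometry {Z W : Type*} [PseudoMetricSpace Z] [PseudoMetricSpace W]
    {f : Z → W} (hf : Isometry f) (hsurj : Surjective f) (e : ℝ≥0) :
    holderSpan Z e = holderSpan W e := by
  ext d
  constructor
  · rintro ⟨γ, ⟨C, hγ⟩, rfl⟩
    exact ⟨f ∘ γ, ⟨C, fun s t => by simpa only [comp_apply, hf.edist_eq] using hγ s t⟩,
      hf.dist_eq _ _⟩
  · rintro ⟨γ, ⟨C, hγ⟩, rfl⟩
    refine ⟨surjInv hsurj ∘ γ, ⟨C, fun s t => ?_⟩, ?_⟩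
    · simpa only [comp_apply, ← hf.edist_eq, surjInv_eq] using hγ s t
    · simp only [comp_apply, ← hf.dist_eq, surjInv_eq]

theorem holderWith_of_dist_le {Y Z : Type*} [PseudoMetricSpace Y] [PseudoMetricSpace Z]
    {f : Z → Y} {C r : ℝ≥0} (hf : ∀ x y, dist (f x) (f y) ≤ C * dist x y ^ (r : ℝ)) :
    HolderWith C r f := fun x y => by
  rw [edist_nndist, edist_nndist, ← ENNReal.coe_rpow_of_nonneg _ r.coe_nonneg]
  exact_mod_cast hf x y

theorem holderWith_inv_of_mul_rpow_le {Y Z : Type*} [PseudoMetricSpace Y] [PseudoMetricSpace Z]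
    {f : Z → Y} {L : ℝ} {e : ℝ≥0} (hL : 0 < L) (he : e ≠ 0)
    (hf : ∀ x y, L * dist (f x) (f y) ^ (e : ℝ) ≤ dist x y) : ∃ C, HolderWith C e⁻¹ f := by
  lift L to ℝ≥0 using hL.le
  refine ⟨(L⁻¹) ^ (e⁻¹ : ℝ), holderWith_of_dist_le fun x y => ?_⟩
  have h : nndist (f x) (f y) ^ (e : ℝ) ≤ L⁻¹ * nndist x y := by
    rw [← div_eq_inv_mul, le_div_iff₀' (by exact_mod_cast hL)]
    exact_mod_cast hf x y
  have h' := (NNReal.le_rpow_inv_iff (by positivity)).2 h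
  rw [NNReal.mul_rpow] at h'
  exact_mod_cast h'

theorem eq_of_holderWith_comp {Y Z : Type*} [MetricSpace Y] [PseudoMetricSpace Z]
    {γ : I → Z} {C e : ℝ≥0} (hγ : HolderWith C e γ) {f : Z → Y} {L : ℝ} {e' : ℝ≥0}
    (hL : 0 < L) (he' : e' ≠ 0) (hee' : e' < e)
    (hf : ∀ x y, L * dist (f x) (f y) ^ (e' : ℝ) ≤ dist x y) (s t : I) :
    f (γ s) = f (γ t) := by
  -- `f` is Hölder of exponent `1 / e'`, so `f ∘ γ` is Hölder of exponent `e / e' > 1`.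
  obtain ⟨C', hf'⟩ := holderWith_inv_of_mul_rpow_le hL he' hf
  refine eq_of_holderWith_of_dimH_lt (hf'.comp hγ) ?_ s t
  rw [dimH_unitInterval, ← div_eq_inv_mul]
  exact_mod_cast (one_lt_div (pos_iff_ne_zero.2 he')).2 hee'

end HolderPaths

section Families

/-- A continuous family of pseudometrics on `K`, parametrized by `P`. -/
structure PseudoMetricFamily (P K : Type*) [TopologicalSpace P] [TopologicalSpace K] where
  toFun : P → K → K → ℝ
  self (p x) : toFun p x x = 0
  comm (p x y) : toFun p x y = toFun p y x
  triangle (p x y z) : toFun p x z ≤ toFun p x y + toFun p y z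
  continuous : Continuous fun q : (P × K) × K => toFun q.1.1 q.1.2 q.2

namespace PseudoMetricFamily

variable {P K : Type*} [TopologicalSpace P] [TopologicalSpace K]

/-- The set `K` with the pseudometric of parameter `p`; it is a type synonym because `K` may
carry a different topology. -/
def Fiber (_F : PseudoMetricFamily P K) (_p : P) : Type _ := K

instance (F : PseudoMetricFamily P K) (p : P) : PseudoMetricSpace (F.Fiber p) where
  dist := F.toFun p
  dist_self := F.self p
  dist_comm := F.comm p
  dist_triangle := F.triangle p

variable [CompactSpace K]

/-- The Kuratowski maps `x ↦ dist x ·` of the members of the family. -/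
def kuratowski (F : PseudoMetricFamily P K) : C(P, C(K, C(K, ℝ))) :=
  (ContinuousMap.mk _ F.continuous).curry.curry

theorem isometry_kuratowski (F : PseudoMetricFamily P K) (p : P) :
    Isometry (fun x : F.Fiber p => F.kuratowski p x) := by
  refine Isometry.of_dist_eq fun x y => le_antisymm ?_ ?_
  · exact (ContinuousMap.dist_le dist_nonneg).2 fun z : F.Fiber p => dist_dist_dist_le_left x y z
  · calc dist x y = dist (dist x y) (dist y y) := by simp
      _ ≤ dist (F.kuratowski p x) (F.kuratowski p y) :=
        ContinuousMap.dist_apply_le_dist (f := F.kuratowski p x) (g := F.kuratowski p y) y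

variable [Nonempty K]

/-- The metric quotient of the fiber over `p`, realized as the image of its Kuratowski map so
that all the quotients lie in one metric space. -/
def quotient (F : PseudoMetricFamily P K) (p : P) : NonemptyCompacts C(K, ℝ) :=
  (⊤ : NonemptyCompacts K).map (F.kuratowski p) (F.kuratowski p).continuous

/-- The point of the Gromov–Hausdorff space given by the pseudometric of parameter `p`. -/
noncomputable def toGHSpace (F : PseudoMetricFamily P K) (p : P) : GHSpace :=
  (F.quotient p).toGHSpace

theorem continuous_toGHSpace (F : PseudoMetricFamily P K) : Continuous F.toGHSpace :=
  toGHSpace_continuous.comp <|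
    continuous_const.nonemptyCompacts_map' (g := fun p => F.kuratowski p) <|
    (ContinuousMap.mk _ F.continuous).curry.continuous

theorem nonempty_quotient_isometryEquiv_rep (F : PseudoMetricFamily P K) (p : P) :
    Nonempty (F.quotient p ≃ᵢ (F.toGHSpace p).Rep) :=
  toGHSpace_eq_toGHSpace_iff_isometryEquiv.1 (GHSpace.toGHSpace_rep (F.toGHSpace p)).symm

theorem coe_quotient (F : PseudoMetricFamily P K) (p : P) :
    (F.quotient p : Set C(K, ℝ)) = range (F.kuratowski p) := by
  simp [quotient]

theorem connectedSpace_rep [ConnectedSpace K] (F : PseudoMetricFamily P K) (p : P) :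
    ConnectedSpace (F.toGHSpace p).Rep := by
  obtain ⟨e⟩ := F.nonempty_quotient_isometryEquiv_rep p
  have : ConnectedSpace (F.quotient p) := isConnected_iff_connectedSpace.1 <| by
    rw [coe_quotient]
    exact isConnected_range (F.kuratowski p).continuous
  exact e.surjective.connectedSpace e.continuous

theorem exists_isometry_surjective_rep (F : PseudoMetricFamily P K) (p : P) :
    ∃ f : F.Fiber p → (F.toGHSpace p).Rep, Isometry f ∧ Surjective f := by
  obtain ⟨e⟩ := F.nonempty_quotient_isometryEquiv_rep p
  let q : F.Fiber p → F.quotient p := fun x => ⟨F.kuratowski p x, x, mem_univ _, rfl⟩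
  have hq : Isometry q := F.isometry_kuratowski p
  have hq_surj : Surjective q := fun ⟨_, x, _, hx⟩ => ⟨x, Subtype.ext hx⟩
  exact ⟨e ∘ q, e.isometry.comp hq, e.surjective.comp hq_surj⟩

theorem toGHSpace_eq_of_isometry (F : PseudoMetricFamily P K) (p : P) {Z : Type*} [MetricSpace Z]
    [CompactSpace Z] [Nonempty Z] {g : F.Fiber p → Z} (hg : Isometry g) (hsurj : Surjective g) :
    F.toGHSpace p = GromovHausdorff.toGHSpace Z := by
  obtain ⟨f, hf, hf_surj⟩ := F.exists_isometry_surjective_rep p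
  rw [← GHSpace.toGHSpace_rep (F.toGHSpace p), toGHSpace_eq_toGHSpace_iff_isometryEquiv]
  have hf_inv : Isometry (surjInv hf_surj) := fun a b => by
    rw [← hf.edist_eq, surjInv_eq hf_surj, surjInv_eq hf_surj]
  refine ⟨IsometryEquiv.mk' (g ∘ surjInv hf_surj) (f ∘ surjInv hsurj) (fun z => ?_)
    (hg.comp hf_inv)⟩
  refine dist_eq_zero.1 ?_
  calc dist (g (surjInv hf_surj (f (surjInv hsurj z)))) z
      = dist (surjInv hf_surj (f (surjInv hsurj z))) (surjInv hsurj z) := by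
        rw [← hg.dist_eq, surjInv_eq hsurj]
    _ = 0 := by rw [← hf.dist_eq, surjInv_eq hf_surj, dist_self]

theorem holderSpan_rep (F : PseudoMetricFamily P K) (p : P) (e : ℝ≥0) :
    holderSpan (F.toGHSpace p).Rep e = holderSpan (F.Fiber p) e := by
  obtain ⟨f, hf, hsurj⟩ := F.exists_isometry_surjective_rep p
  exact (holderSpan_eq_of_isometry hf hsurj e).symm

end PseudoMetricFamily

end Families

section Snowflake

/-- Hölder exponents strictly decreasing to `1 / 2`. -/
noncomputable def holderExp (k : ℕ) : ℝ≥0 := 2⁻¹ + (k + 2 : ℝ≥0)⁻¹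

theorem inv_two_lt_holderExp (k : ℕ) : 2⁻¹ < holderExp k :=
  lt_add_of_pos_right _ (by positivity)

theorem holderExp_pos (k : ℕ) : 0 < holderExp k := by
  unfold holderExp
  positivity

theorem holderExp_strictAnti : StrictAnti holderExp := fun j k hjk => by
  unfold holderExp
  gcongr

theorem holderExp_le_one (k : ℕ) : holderExp k ≤ 1 :=
  calc holderExp k ≤ holderExp 0 := holderExp_strictAnti.antitone k.zero_le
    _ = 1 := by simp [holderExp, ← two_mul]

theorem dist_rpow_triangle {Y : Type*} [PseudoMetricSpace Y] {e : ℝ} (he₀ : 0 ≤ e) (he₁ : e ≤ 1)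
    (x y z : Y) : dist x z ^ e ≤ dist x y ^ e + dist y z ^ e :=
  (Real.rpow_le_rpow dist_nonneg (dist_triangle x y z) he₀).trans
    (Real.rpow_add_le_add_rpow dist_nonneg dist_nonneg he₀ he₁)

/-- The `j`-th coordinate of the pseudometric on the Hilbert cube with weights `b`. -/
noncomputable def cubeTerm (b u w : ℕ → I) (j : ℕ) : ℝ :=
  (1 / 2) ^ j * b j * dist (u j) (w j) ^ (holderExp j : ℝ)

theorem cubeTerm_nonneg (b u w : ℕ → I) (j : ℕ) : 0 ≤ cubeTerm b u w j := by
  have := (b j).2.1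
  unfold cubeTerm
  positivity

theorem cubeTerm_le_weight (b u w : ℕ → I) (j : ℕ) : cubeTerm b u w j ≤ (1 / 2) ^ j * b j :=
  mul_le_of_le_one_right (mul_nonneg (by positivity) (b j).2.1) <|
    Real.rpow_le_one dist_nonneg (Real.dist_le_of_mem_Icc_01 (u j).2 (w j).2) (NNReal.coe_nonneg _)

theorem cubeTerm_le_geometric (b u w : ℕ → I) (j : ℕ) : cubeTerm b u w j ≤ (1 / 2) ^ j :=
  (cubeTerm_le_weight b u w j).trans (mul_le_of_le_one_right (by positivity) (b j).2.2)

theorem summable_cubeTerm (b u w : ℕ → I) : Summable (cubeTerm b u w) :=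
  .of_nonneg_of_le (cubeTerm_nonneg b u w) (cubeTerm_le_geometric b u w) summable_geometric_two

theorem cubeTerm_eq_zero (b : ℕ → I) {u w : ℕ → I} {j : ℕ} (h : u j = w j) :
    cubeTerm b u w j = 0 := by
  simp [cubeTerm, h, (holderExp_pos j).ne']

theorem cubeTerm_triangle (b u w z : ℕ → I) (j : ℕ) :
    cubeTerm b u z j ≤ cubeTerm b u w j + cubeTerm b w z j := by
  unfold cubeTerm
  rw [← mul_add]
  exact mul_le_mul_of_nonneg_left
    (dist_rpow_triangle (holderExp j).2 (holderExp_le_one j) _ _ _)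
    (mul_nonneg (by positivity) (b j).2.1)

theorem continuous_tsum_cubeTerm :
    Continuous fun q : ((ℕ → I) × (ℕ → I)) × (ℕ → I) => ∑' j, cubeTerm q.1.1 q.1.2 q.2 j := by
  refine continuous_tsum (u := fun j => (1 / 2 : ℝ) ^ j) (fun j => ?_) summable_geometric_two
    fun j q => ?_
  · unfold cubeTerm
    have := (holderExp_pos j).le
    fun_prop (disch := exact this)
  · rw [Real.norm_of_nonneg (cubeTerm_nonneg _ _ _ j)]
    exact cubeTerm_le_geometric _ _ _ j

/-- The combination `l d + s √d` of a metric `d` with its snowflake. -/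
noncomputable def snowflakeSum {Y : Type*} [PseudoMetricSpace Y] (l : ℝ≥0) (s : I) (x y : Y) : ℝ :=
  l * dist x y + s * dist x y ^ ((2⁻¹ : ℝ≥0) : ℝ)

section snowflakeSum

variable {Y : Type*} [PseudoMetricSpace Y]

theorem snowflakeSum_self (l : ℝ≥0) (s : I) (x : Y) : snowflakeSum l s x x = 0 := by
  simp [snowflakeSum]

theorem snowflakeSum_nonneg (l : ℝ≥0) (s : I) (x y : Y) : 0 ≤ snowflakeSum l s x y := by
  have := s.2.1
  unfold snowflakeSum
  positivity

theorem snowflakeSum_triangle (l : ℝ≥0) (s : I) (x y z : Y) :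
    snowflakeSum l s x z ≤ snowflakeSum l s x y + snowflakeSum l s y z := by
  have h₁ := mul_le_mul_of_nonneg_left (dist_triangle x y z) l.coe_nonneg
  have h₂ := mul_le_mul_of_nonneg_left
    (dist_rpow_triangle (e := (2⁻¹ : ℝ≥0)) (by positivity) (by norm_num) x y z) s.2.1
  exact (add_le_add h₁ h₂).trans_eq (by unfold snowflakeSum; ring)

theorem mul_rpow_le_snowflakeSum (l : ℝ≥0) (s : I) (x y : Y) :
    s * dist x y ^ ((2⁻¹ : ℝ≥0) : ℝ) ≤ snowflakeSum l s x y :=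
  le_add_of_nonneg_left (by positivity)

end snowflakeSum

variable {ι : Type*} [Fintype ι] (X : ι → Type*)

/-- The pseudometrics on the product of the `X i` and the Hilbert cube which give the factor `X i`
the metric `l i * d + b 0 * √d` and the `j`-th factor of the cube the metric
`2⁻ʲ * b j * |u - w| ^ holderExp j`, where `(l, b)` are the parameters. The weight `b 0` has two
roles, so that the snowflakes of the `X i` appear as soon as the cube does. -/
noncomputable def snowflakeFamily [∀ i, PseudoMetricSpace (X i)] :
    PseudoMetricFamily ((ι → ℝ≥0) × (ℕ → I)) ((∀ i, X i) × (ℕ → I)) where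
  toFun p x y :=
    ∑ i, snowflakeSum (p.1 i) (p.2 0) (x.1 i) (y.1 i) + ∑' j, cubeTerm p.2 x.2 y.2 j
  self p x := by
    simp only [snowflakeSum_self, cubeTerm_eq_zero, Finset.sum_const_zero, tsum_zero, add_zero]
  comm p x y := by simp only [snowflakeSum, cubeTerm, dist_comm]
  triangle p x y z := by
    have h₁ := Finset.sum_le_sum fun i (_ : i ∈ Finset.univ) =>
      snowflakeSum_triangle (p.1 i) (p.2 0) (x.1 i) (y.1 i) (z.1 i)
    have h₂ := (summable_cubeTerm p.2 x.2 z.2).tsum_le_tsum (cubeTerm_triangle p.2 x.2 y.2 z.2)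
      ((summable_cubeTerm p.2 x.2 y.2).add (summable_cubeTerm p.2 y.2 z.2))
    rw [(summable_cubeTerm p.2 x.2 y.2).tsum_add (summable_cubeTerm p.2 y.2 z.2)] at h₂
    rw [Finset.sum_add_distrib] at h₁
    linarith
  continuous := by
    refine .add (continuous_finsetSum _ fun i _ => ?_) (continuous_tsum_cubeTerm.comp
      (f := fun q : ((((ι → ℝ≥0) × (ℕ → I)) × ((∀ i, X i) × (ℕ → I))) × ((∀ i, X i) × (ℕ → I))) =>
        ((q.1.1.2, q.1.2.2), q.2.2)) (by fun_prop))
    unfold snowflakeSum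
    fun_prop (disch := positivity)

namespace snowflakeFamily

section PseudoMetric

variable [∀ i, PseudoMetricSpace (X i)]

theorem dist_eq {p : (ι → ℝ≥0) × (ℕ → I)} (x y : (snowflakeFamily X).Fiber p) :
    dist x y = ∑ i, snowflakeSum (p.1 i) (p.2 0) (x.1 i) (y.1 i) + ∑' j, cubeTerm p.2 x.2 y.2 j :=
  rfl

theorem mul_rpow_dist_fst_le {p : (ι → ℝ≥0) × (ℕ → I)}
    (x y : (snowflakeFamily X).Fiber p) (i : ι) :
    p.2 0 * dist (x.1 i) (y.1 i) ^ ((2⁻¹ : ℝ≥0) : ℝ) ≤ dist x y :=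
  calc _ ≤ snowflakeSum (p.1 i) (p.2 0) (x.1 i) (y.1 i) := mul_rpow_le_snowflakeSum _ _ _ _
    _ ≤ ∑ i, snowflakeSum (p.1 i) (p.2 0) (x.1 i) (y.1 i) :=
      Finset.single_le_sum (f := fun i => snowflakeSum (p.1 i) (p.2 0) (x.1 i) (y.1 i))
        (fun _ _ => snowflakeSum_nonneg _ _ _ _) (Finset.mem_univ i)
    _ ≤ dist x y := le_add_of_nonneg_right (tsum_nonneg (cubeTerm_nonneg _ _ _))

theorem cubeTerm_le_dist {p : (ι → ℝ≥0) × (ℕ → I)} (x y : (snowflakeFamily X).Fiber p) (j : ℕ) :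
    cubeTerm p.2 x.2 y.2 j ≤ dist x y :=
  calc _ ≤ ∑' j, cubeTerm p.2 x.2 y.2 j :=
        (summable_cubeTerm _ _ _).le_tsum j fun j _ => cubeTerm_nonneg _ _ _ j
    _ ≤ dist x y := le_add_of_nonneg_left (Finset.sum_nonneg fun _ _ => snowflakeSum_nonneg _ _ _ _)

theorem dist_diagonal (p : (ι → ℝ≥0) × (ℕ → I)) (k : ℕ) (a : ∀ i, X i) (s t : I) :
    (snowflakeFamily X).toFun p (a, fun j => if j ≤ k then s else 0)
        (a, fun j => if j ≤ k then t else 0) =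
      ∑ j ∈ Finset.range (k + 1), (1 / 2) ^ j * p.2 j * dist s t ^ (holderExp j : ℝ) := by
  simp only [snowflakeFamily, snowflakeSum_self, Finset.sum_const_zero, zero_add]
  rw [tsum_eq_sum (s := Finset.range (k + 1)) fun j hj => cubeTerm_eq_zero _ ?_]
  · refine Finset.sum_congr rfl fun j hj => ?_
    simp only [cubeTerm, if_pos (Finset.mem_range_succ_iff.1 hj)]
  · simp only [if_neg (mt Finset.mem_range_succ_iff.2 hj)]

theorem sum_weights_mem_holderSpan [∀ i, Nonempty (X i)] (p : (ι → ℝ≥0) × (ℕ → I)) (k : ℕ) :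
    ∑ j ∈ Finset.range (k + 1), (1 / 2) ^ j * (p.2 j : ℝ) ∈
      holderSpan ((snowflakeFamily X).Fiber p) (holderExp k) := by
  have hw (j : ℕ) : 0 ≤ (1 / 2) ^ j * (p.2 j : ℝ) := mul_nonneg (by positivity) (p.2 j).2.1
  let a (i : ι) : X i := Classical.arbitrary (X i)
  let γ (s : I) : (snowflakeFamily X).Fiber p := (a, fun j => if j ≤ k then s else 0)
  have hγ (s t : I) : dist (γ s) (γ t) = _ := dist_diagonal X p k a s t
  refine ⟨γ, ⟨.mk _ (Finset.sum_nonneg (s := Finset.range (k + 1)) fun j _ => hw j),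
    holderWith_of_dist_le fun s t => ?_⟩, ?_⟩
  · rw [hγ, NNReal.coe_mk, Finset.sum_mul]
    refine Finset.sum_le_sum fun j hj => mul_le_mul_of_nonneg_left ?_ (hw j)
    exact Real.rpow_le_rpow_of_exponent_ge' dist_nonneg (Real.dist_le_of_mem_Icc_01 s.2 t.2)
      (holderExp k).2 (holderExp_strictAnti.antitone (Finset.mem_range_succ_iff.1 hj))
  · simp [hγ, Subtype.dist_eq]

end PseudoMetric

variable [∀ i, MetricSpace (X i)]

theorem le_sum_weights_of_mem_holderSpan {p : (ι → ℝ≥0) × (ℕ → I)} (hp : p.2 0 ≠ 0) {k : ℕ}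
    {d : ℝ}
    (hd : d ∈ holderSpan ((snowflakeFamily X).Fiber p) (holderExp k)) :
    d ≤ ∑ j ∈ Finset.range (k + 1), (1 / 2) ^ j * (p.2 j : ℝ) := by
  obtain ⟨γ, ⟨C, hγ⟩, rfl⟩ := hd
  have hfst (i : ι) : (γ 0).1 i = (γ 1).1 i :=
    eq_of_holderWith_comp hγ (f := fun x => x.1 i) (unitInterval.pos_iff_ne_zero.2 hp) (by simp)
      (inv_two_lt_holderExp k) (fun x y => mul_rpow_dist_fst_le X x y i) 0 1
  have hsnd (j : ℕ) (hj : j ∉ Finset.range (k + 1)) : cubeTerm p.2 (γ 0).2 (γ 1).2 j = 0 := by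
    by_cases hb : p.2 j = 0
    · simp [cubeTerm, hb]
    · exact cubeTerm_eq_zero _ <| eq_of_holderWith_comp hγ (f := fun x => x.2 j)
        (mul_pos (by positivity) (unitInterval.pos_iff_ne_zero.2 hb)) (holderExp_pos j).ne'
        (holderExp_strictAnti (by simpa using hj)) (fun x y => cubeTerm_le_dist X x y j) 0 1
  calc dist (γ 0) (γ 1) = ∑ j ∈ Finset.range (k + 1), cubeTerm p.2 (γ 0).2 (γ 1).2 j := by
        simp only [dist_eq, hfst, snowflakeSum_self, Finset.sum_const_zero, zero_add]
        exact tsum_eq_sum hsnd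
    _ ≤ _ := Finset.sum_le_sum fun j _ => cubeTerm_le_weight _ _ _ j

variable [∀ i, Nonempty (X i)]

theorem isGreatest_holderSpan {p : (ι → ℝ≥0) × (ℕ → I)} (hp : p.2 0 ≠ 0) (k : ℕ) :
    IsGreatest (holderSpan ((snowflakeFamily X).Fiber p) (holderExp k))
      (∑ j ∈ Finset.range (k + 1), (1 / 2) ^ j * (p.2 j : ℝ)) :=
  ⟨sum_weights_mem_holderSpan X p k, fun _ => le_sum_weights_of_mem_holderSpan X hp⟩

variable [∀ i, CompactSpace (X i)]

theorem weights_eq_of_toGHSpace_eq {p q : (ι → ℝ≥0) × (ℕ → I)} (hp : p.2 0 ≠ 0) (hq : q.2 0 ≠ 0)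
    (h : (snowflakeFamily X).toGHSpace p = (snowflakeFamily X).toGHSpace q) : p.2 = q.2 := by
  have hsum (n : ℕ) : ∑ j ∈ Finset.range n, (1 / 2) ^ j * (p.2 j : ℝ) =
      ∑ j ∈ Finset.range n, (1 / 2) ^ j * (q.2 j : ℝ) := by
    cases n with
    | zero => simp
    | succ k =>
      have hP := isGreatest_holderSpan X hp k
      rw [← PseudoMetricFamily.holderSpan_rep, h, PseudoMetricFamily.holderSpan_rep] at hP
      exact hP.unique (isGreatest_holderSpan X hq k)
  funext j
  have hj : (1 / 2) ^ j * (p.2 j : ℝ) = (1 / 2) ^ j * (q.2 j : ℝ) := by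
    rw [← Finset.sum_range_succ_sub_sum (fun j => (1 / 2) ^ j * (p.2 j : ℝ)), hsum, hsum,
      Finset.sum_range_succ_sub_sum]
  exact Subtype.ext (mul_left_cancel₀ (by positivity) hj)

theorem toGHSpace_single [DecidableEq ι] (i : ι) :
    (snowflakeFamily X).toGHSpace (Pi.single i 1, 0) = toGHSpace (X i) := by
  let proj : (snowflakeFamily X).Fiber (Pi.single i 1, 0) → X i := fun x => x.1 i
  have hproj : Isometry proj := .of_dist_eq fun x y => by
    simp [dist_eq, snowflakeSum, cubeTerm, proj, Pi.single_apply, apply_ite ((↑) : ℝ≥0 → ℝ)]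
  refine PseudoMetricFamily.toGHSpace_eq_of_isometry _ _ hproj fun z => ?_
  exact ⟨(update (fun i => Classical.arbitrary (X i)) i z, 0), by simp [proj]⟩

end snowflakeFamily

end Snowflake

section Weights

/-- The sequence `s, s * u 0, s * u 1, …`. -/
def scaledCons (s : I) (u : ℕ → I) : ℕ → I
  | 0 => s
  | j + 1 => s * u j

theorem scaledCons_zero_left (u : ℕ → I) : scaledCons 0 u = 0 := by
  funext j
  cases j <;> simp [scaledCons]

theorem scaledCons_inj {s s' : I} {u u' : ℕ → I} (hs : s ≠ 0) :
    scaledCons s u = scaledCons s' u' ↔ s = s' ∧ u = u' := by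
  refine ⟨fun h => ?_, fun ⟨h, h'⟩ => h ▸ h' ▸ rfl⟩
  obtain rfl : s = s' := congrFun h 0
  exact ⟨rfl, funext fun j => mul_left_cancel₀ hs (congrFun h (j + 1))⟩

theorem continuous_scaledCons : Continuous fun q : I × (ℕ → I) => scaledCons q.1 q.2 := by
  refine continuous_pi fun j => ?_
  cases j with
  | zero => exact continuous_fst
  | succ j =>
    simp only [scaledCons]
    fun_prop

universe u

variable {ι : Type*} [Finite ι] {T : Type u} [TopologicalSpace T]

theorem exists_continuousMap_apply_eq [T1Space T] [NormalSpace T] {v : ι → T} (hv : Injective v)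
    {Y : Type*} [TopologicalSpace Y] [TietzeExtension.{u} Y] (y : ι → Y) :
    ∃ f : C(T, Y), ∀ i, f (v i) = y i := by
  let : TopologicalSpace ι := ⊥
  have : DiscreteTopology ι := ⟨rfl⟩
  have hv' : IsClosedEmbedding v :=
    .of_continuous_injective_isClosedMap continuous_of_discreteTopology hv
      fun s _ => (s.toFinite.image v).isClosed
  obtain ⟨f, hf⟩ := ContinuousMap.exists_extension' hv' ⟨y, continuous_of_discreteTopology⟩
  exact ⟨f, congrFun hf⟩

theorem exists_continuousMap_unitInterval_eq_zero_iff [PerfectlyNormalSpace T] {s : Set T}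
    (hs : IsClosed s) : ∃ r : C(T, I), ∀ x, r x = 0 ↔ x ∈ s := by
  obtain ⟨f, rfl, hf⟩ := perfectlyNormalSpace_iff_forall_isClosed_preimage_zero.1 ‹_› s hs
  exact ⟨⟨fun x => ⟨f x, hf x⟩, by fun_prop⟩, fun x => Subtype.ext_iff⟩

end Weights

section CubeMap

variable {ι : Type*} [Fintype ι] (X : ι → Type*) [∀ i, MetricSpace (X i)]
  [∀ i, CompactSpace (X i)] [∀ i, Nonempty (X i)]

/-- The candidate embeddings of the Hilbert cube, indexed by `t`: the weights at `u` are
`t * r u, t * r u * u 0, t * r u * u 1, …`, so that the cube factor degenerates exactly where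
`r` vanishes. -/
noncomputable def cubeMap (lam : C(ℕ → I, ι → ℝ≥0)) (r : C(ℕ → I, I)) (t : I) (u : ℕ → I) :
    GHSpace :=
  (snowflakeFamily X).toGHSpace (lam u, scaledCons (t * r u) u)

variable (lam : C(ℕ → I, ι → ℝ≥0)) (r : C(ℕ → I, I))

theorem continuous_cubeMap (t : I) : Continuous (cubeMap X lam r t) :=
  (snowflakeFamily X).continuous_toGHSpace.comp <| lam.continuous.prodMk <|
    continuous_scaledCons.comp (f := fun u => (t * r u, u)) (by fun_prop)

theorem cubeMap_of_eq_single [DecidableEq ι] {u : ℕ → I} {i : ι} (hlam : lam u = Pi.single i 1)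
    (hr : r u = 0) (t : I) : cubeMap X lam r t u = toGHSpace (X i) := by
  rw [cubeMap, hlam, hr, mul_zero, scaledCons_zero_left, snowflakeFamily.toGHSpace_single]

theorem eq_and_eq_of_cubeMap_eq {t t' : I} (ht : t ≠ 0) (ht' : t' ≠ 0) {u u' : ℕ → I}
    (hu : r u ≠ 0) (hu' : r u' ≠ 0) (h : cubeMap X lam r t u = cubeMap X lam r t' u') :
    t = t' ∧ u = u' := by
  have hw := snowflakeFamily.weights_eq_of_toGHSpace_eq X (mul_ne_zero ht hu)
    (mul_ne_zero ht' hu') h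
  obtain ⟨hs, rfl⟩ := (scaledCons_inj (mul_ne_zero ht hu)).1 hw
  exact ⟨mul_right_cancel₀ hu hs, rfl⟩

theorem exists_forall_cubeMap_ne {κ : Type*} [Finite κ] (Z : κ → GHSpace) :
    ∃ t ≠ 0, ∀ i u, r u ≠ 0 → cubeMap X lam r t u ≠ Z i := by
  let bad (i : κ) : Set I := {t | t ≠ 0 ∧ ∃ u, r u ≠ 0 ∧ cubeMap X lam r t u = Z i}
  have hbad (i : κ) : (bad i).Subsingleton := fun t ⟨ht, u, hu, h⟩ t' ⟨ht', u', hu', h'⟩ =>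
    (eq_and_eq_of_cubeMap_eq X lam r ht ht' hu hu' (h.trans h'.symm)).1
  have hfin : ({0} ∪ ⋃ i, bad i).Finite :=
    (finite_singleton 0).union (finite_iUnion fun i => (hbad i).finite)
  have : Infinite I := (Icc_infinite zero_lt_one).to_subtype
  obtain ⟨t, ht⟩ := hfin.exists_notMem
  simp only [mem_union, mem_singleton_iff, mem_iUnion, not_or, not_exists] at ht
  exact ⟨t, ht.1, fun i u hu h => ht.2 i ⟨ht.1, u, hu, h⟩⟩

end CubeMap

theorem exists_isEmbedding_hilbertCube {ι : Type*} [Finite ι] (X : ι → Type*)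
    [∀ i, MetricSpace (X i)] [∀ i, CompactSpace (X i)] [∀ i, Nonempty (X i)]
    (hX : Injective fun i => toGHSpace (X i)) {v : ι → ℕ → I} (hv : Injective v) :
    ∃ Φ : (ℕ → I) → GHSpace, IsEmbedding Φ ∧
      ((∀ i, ConnectedSpace (X i)) → ∀ u, ConnectedSpace (Φ u).Rep) ∧
      ∀ i, Φ (v i) = toGHSpace (X i) := by
  classical
  have := Fintype.ofFinite ι
  obtain ⟨lam, hlam⟩ := exists_continuousMap_apply_eq hv fun i => (Pi.single i 1 : ι → ℝ≥0)
  obtain ⟨r, hr⟩ := exists_continuousMap_unitInterval_eq_zero_iff (finite_range v).isClosed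
  obtain ⟨t, ht, hne⟩ := exists_forall_cubeMap_ne X lam r fun i => toGHSpace (X i)
  have hvertex (i : ι) : cubeMap X lam r t (v i) = toGHSpace (X i) :=
    cubeMap_of_eq_single X lam r (hlam i) ((hr _).2 ⟨i, rfl⟩) t
  have hinj : Injective (cubeMap X lam r t) := by
    intro u u' h
    by_cases hu : r u = 0 <;> by_cases hu' : r u' = 0
    · obtain ⟨i, rfl⟩ := (hr u).1 hu
      obtain ⟨j, rfl⟩ := (hr u').1 hu'
      exact congrArg v (hX ((hvertex i).symm.trans (h.trans (hvertex j))))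
    · obtain ⟨i, rfl⟩ := (hr u).1 hu
      exact absurd (h.symm.trans (hvertex i)) (hne i u' hu')
    · obtain ⟨j, rfl⟩ := (hr u').1 hu'
      exact absurd (h.trans (hvertex j)) (hne j u hu)
    · exact (eq_and_eq_of_cubeMap_eq X lam r ht ht hu hu' h).2
  exact ⟨cubeMap X lam r t, ((continuous_cubeMap X lam r t).isClosedEmbedding hinj).isEmbedding,
    fun _ _ => PseudoMetricFamily.connectedSpace_rep _ _, hvertex⟩

end GHEmbedding

theorem statement0_general {H : Type*} [TopologicalSpace H] [TopologicalSpace.MetrizableSpace H]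
    [TopologicalSpace.SeparableSpace H] {ι : Type*} [Finite ι]
    {v : ι → H} (hv : Function.Injective v)
    (X : ι → Type*) [∀ i, MetricSpace (X i)] [∀ i, CompactSpace (X i)] [∀ i, Nonempty (X i)]
    (hdist : Pairwise fun i j => 0 < ghDist (X i) (X j)) :
    ∃ Φ : H → GHSpace,
      Topology.IsEmbedding Φ ∧
      ((∀ i, ConnectedSpace (X i)) → ∀ h : H, ConnectedSpace (Φ h).Rep) ∧
      ∀ i, Φ (v i) = toGHSpace (X i) := by
  let := TopologicalSpace.metrizableSpaceMetric H
  have hX : Function.Injective fun i => toGHSpace (X i) :=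
    Function.injective_iff_pairwise_ne.2 fun _ _ hij => dist_pos.1 (hdist hij)
  obtain ⟨e, he⟩ := Metric.PiNatEmbed.exists_embedding_to_hilbert_cube (X := H)
  obtain ⟨Φ, hΦ, hconn, hvertex⟩ := GHEmbedding.exists_isEmbedding_hilbertCube X hX
    (he.injective.comp hv)
  exact ⟨Φ ∘ e, hΦ.comp he, fun h x => hconn h (e x), hvertex⟩

/-- Let `H` be a compact metrizable space, `n ≥ 1`, and
`v 0, …, v n` be `n+1` distinct points of `H`.  Let `X 0, …, X n` be compact
connected (nonempty) metric spaces with positive pairwise Gromov–Hausdorff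
distances.  Then there is a topological embedding `Φ` of `H` into the subset
`𝒞` of the Gromov–Hausdorff space consisting of connected compact metric
spaces (i.e. an embedding into the Gromov–Hausdorff space whose range consists
of connected spaces) such that `Φ (v i)` is the isometry class of `X i`. -/
theorem statement0 {H : Type*} [TopologicalSpace H] [CompactSpace H]
    [TopologicalSpace.MetrizableSpace H]
    (n : ℕ) (hn : 1 ≤ n) (v : Fin (n + 1) → H) (hv : Function.Injective v)
    (X : Fin (n + 1) → Type) [∀ i, MetricSpace (X i)] [∀ i, CompactSpace (X i)]
    [∀ i, Nonempty (X i)]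
    (hconn : ∀ i, ConnectedSpace (X i))
    (hdist : ∀ i j, i ≠ j → 0 < ghDist (X i) (X j)) :
    ∃ Φ : H → GHSpace,
      Topology.IsEmbedding Φ ∧
      (∀ h : H, ConnectedSpace (Φ h).Rep) ∧
      ∀ i, Φ (v i) = toGHSpace (X i) := by
  let := TopologicalSpace.metrizableSpaceMetric H
  obtain ⟨Φ, hΦ, hΦ_conn, hvertex⟩ := statement0_general hv X hdist
  exact ⟨Φ, hΦ, hΦ_conn hconn, hvertex⟩
end

section
/- Let H be a compact metrizable space, let n ≥ 1, and let v_1, …, v_{n+1} be n+1 distinct points of H. Let (X_1,d_1), …, (X_{n+1},d_{n+1}) be compact path-connected metric spaces with d_GH((X_i,d_i),(X_j,d_j)) > 0 for all distinct i, j. Then there exists a topological embedding Φ : H → 𝒫 (into the Gromov–Hausdorff space) such that Φ(v_i) = (X_i,d_i) for every i = 1, …, n+1. -/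
open GromovHausdorff

/-!
The Kuratowski embedding turns a continuous family of pseudometrics on one compact space into a
continuous map to the Gromov–Hausdorff space. The family used here lives on the wedge of `∏ i, X i`
with countably many arms and is governed by a scale `r` that vanishes exactly at the vertices `v i`.
At `v i` the arms collapse and the product metric degenerates to the metric of `X i`. Where `r > 0`,
the metric of the product is damped by the strictly concave function `u / (1 + r u)`, so that no
point of the product lies between two others. The wedge point is then the only branch point, and the
set of lengths of the arms issuing from it is an isometry invariant, from which a point of the
Hilbert cube, hence of `H`, can be decoded. One arm length is left free, so that these sets avoid
the finitely many invariants of the spaces `X i`.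
-/

open Function Set Topology
open scoped NNReal unitInterval

instance compactSpace_range_continuousMap {S M : Type*} [TopologicalSpace S] [CompactSpace S]
    [TopologicalSpace M] (F : C(S, M)) : CompactSpace (range F) :=
  isCompact_iff_compactSpace.1 (isCompact_range F.continuous)

theorem continuous_toGHSpace_range {H S M : Type*} [TopologicalSpace H] [TopologicalSpace S]
    [CompactSpace S] [Nonempty S] [MetricSpace M] {F : H → C(S, M)} (hF : Continuous F) :
    Continuous fun h => toGHSpace (range (F h)) := by
  refine Metric.continuous_iff'.2 fun h ε hε => ?_
  filter_upwards [Metric.continuous_iff'.1 hF h ε hε] with a ha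
  have close : ∀ x, dist (F a x) (F h x) ≤ dist (F a) (F h) := fun x =>
    ContinuousMap.dist_apply_le_dist x
  calc dist (toGHSpace (range (F a))) (toGHSpace (range (F h)))
      ≤ Metric.hausdorffDist (range ((↑) : range (F a) → M)) (range ((↑) : range (F h) → M)) :=
        ghDist_le_hausdorffDist isometry_subtype_coe isometry_subtype_coe
    _ ≤ dist (F a) (F h) := by
        simp only [Subtype.range_coe]
        refine Metric.hausdorffDist_le_of_mem_dist dist_nonneg ?_ ?_
        · rintro _ ⟨x, rfl⟩
          exact ⟨F h x, mem_range_self x, close x⟩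
        · rintro _ ⟨x, rfl⟩
          exact ⟨F a x, mem_range_self x, dist_comm (F a x) (F h x) ▸ close x⟩
    _ < ε := ha

/-- The Kuratowski embedding `x ↦ d x ·` of a continuous pseudometric `d`, which realizes the
metric quotient of `d` inside `C(S, ℝ)`. -/
def kuratowskiMap {S : Type*} [TopologicalSpace S] (d : PseudoMetric S ℝ)
    (hd : Continuous fun z : S × S => d z.1 z.2) : C(S, C(S, ℝ)) :=
  ContinuousMap.curry ⟨fun z => d z.1 z.2, hd⟩

theorem dist_kuratowskiMap {S : Type*} [TopologicalSpace S] [CompactSpace S]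
    (d : PseudoMetric S ℝ) (hd : Continuous fun z : S × S => d z.1 z.2) (x y : S) :
    dist (kuratowskiMap d hd x) (kuratowskiMap d hd y) = d x y := by
  refine le_antisymm ((ContinuousMap.dist_le (d.nonneg x y)).2 fun z => ?_) ?_
  · change |d x z - d y z| ≤ d x y
    rw [abs_sub_le_iff]
    constructor
    · linarith [d.triangle x y z]
    · linarith [d.triangle y x z, d.symm x y]
  · calc d x y = d x y - d y y := by rw [d.refl, sub_zero]
      _ ≤ dist (kuratowskiMap d hd x y) (kuratowskiMap d hd y y) := le_abs_self _
      _ ≤ dist (kuratowskiMap d hd x) (kuratowskiMap d hd y) :=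
        ContinuousMap.dist_apply_le_dist y

theorem exists_continuous_toGHSpace_of_pseudoMetric {T S : Type*} [TopologicalSpace T]
    [TopologicalSpace S] [CompactSpace S] [Nonempty S] (d : T → PseudoMetric S ℝ)
    (hd : Continuous fun z : T × S × S => d z.1 z.2.1 z.2.2) :
    ∃ Ψ : T → GHSpace, Continuous Ψ ∧ ∀ τ, ∃ f : S → (Ψ τ).Rep,
      Continuous f ∧ Surjective f ∧ ∀ x y, dist (f x) (f y) = d τ x y := by
  have hdτ : ∀ τ, Continuous fun z : S × S => d τ z.1 z.2 := fun τ =>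
    hd.comp (Continuous.prodMk_right τ)
  let K : T → C(S, C(S, ℝ)) := fun τ => kuratowskiMap (d τ) (hdτ τ)
  have hK : Continuous K := by
    refine ContinuousMap.continuous_of_continuous_uncurry _
      (ContinuousMap.continuous_of_continuous_uncurry _ ?_)
    exact hd.comp (Homeomorph.prodAssoc T S S).continuous
  refine ⟨fun τ => toGHSpace (range (K τ)), continuous_toGHSpace_range hK, fun τ => ?_⟩
  obtain ⟨e⟩ := toGHSpace_eq_toGHSpace_iff_isometryEquiv.1
    (toGHSpace (range (K τ))).toGHSpace_rep.symm
  refine ⟨e ∘ rangeFactorization (K τ), e.continuous.comp (by fun_prop),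
    e.surjective.comp rangeFactorization_surjective, fun x y => ?_⟩
  exact (e.dist_eq _ _).trans (dist_kuratowskiMap (d τ) (hdτ τ) x y)

theorem toGHSpace_eq_of_dist_eq {S M N : Type*} [MetricSpace M] [CompactSpace M] [Nonempty M]
    [MetricSpace N] [CompactSpace N] [Nonempty N] {f : S → M} {g : S → N} (hf : Surjective f)
    (hg : Surjective g) (h : ∀ x y, dist (f x) (f y) = dist (g x) (g y)) :
    toGHSpace M = toGHSpace N := by
  have hinv : RightInverse (surjInv hf) f := rightInverse_surjInv hf
  have hiso : Isometry (g ∘ surjInv hf) :=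
    Isometry.of_dist_eq fun a b => by simp only [comp_apply, ← h, hinv a, hinv b]
  have hsurj : Surjective (g ∘ surjInv hf) := fun b => by
    obtain ⟨x, rfl⟩ := hg b
    exact ⟨f x, dist_eq_zero.1 (by rw [comp_apply, ← h, hinv, dist_self])⟩
  exact toGHSpace_eq_toGHSpace_iff_isometryEquiv.2
    ⟨⟨Equiv.ofBijective _ ⟨hiso.injective, hsurj⟩, hiso⟩⟩

section Betweenness

variable {S T : Type*}

/-- `y` lies metrically between `x` and `z`: the triangle inequality through `y` is an equality.
The distance is a bare function so that pseudometrics and `dist` are covered alike. -/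
def MetricBtw (d : S → S → ℝ) (x y z : S) : Prop :=
  d x z = d x y + d y z

/-- `q` is a branch point: three points at positive distance from `q` are pairwise separated
by `q`. -/
def IsBranchPoint (d : S → S → ℝ) (q : S) : Prop :=
  ∃ x : Fin 3 → S, (∀ i, d q (x i) ≠ 0) ∧ Pairwise fun i j => MetricBtw d (x i) q (x j)

/-- `t` is the tip of an arm issuing from `q`: nothing lies beyond `t` as seen from `q`, but
something lies strictly between `q` and `t`. -/
def IsArmTip (d : S → S → ℝ) (q t : S) : Prop :=
  (∀ w, MetricBtw d q t w → d t w = 0) ∧ ∃ z, d q z ≠ 0 ∧ d z t ≠ 0 ∧ MetricBtw d q z t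

/-- The isometry invariant that tells the constructed spaces apart: the lengths of the arms issuing
from branch points. -/
def armLengths (d : S → S → ℝ) : Set ℝ :=
  {L | ∃ q t, IsBranchPoint d q ∧ IsArmTip d q t ∧ d q t = L}

theorem isBranchPoint_comp_iff {d : S → S → ℝ} {e : T → T → ℝ} {f : S → T} (hf : Surjective f)
    (h : ∀ x y, e (f x) (f y) = d x y) (q : S) : IsBranchPoint e (f q) ↔ IsBranchPoint d q := by
  simp only [IsBranchPoint, hf.comp_left.exists, comp_apply, MetricBtw, h]

theorem isArmTip_comp_iff {d : S → S → ℝ} {e : T → T → ℝ} {f : S → T} (hf : Surjective f)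
    (h : ∀ x y, e (f x) (f y) = d x y) (q t : S) : IsArmTip e (f q) (f t) ↔ IsArmTip d q t := by
  simp only [IsArmTip, hf.exists, hf.forall, MetricBtw, h]

theorem armLengths_eq_of_surjective {d : S → S → ℝ} {e : T → T → ℝ} {f : S → T}
    (hf : Surjective f) (h : ∀ x y, e (f x) (f y) = d x y) : armLengths e = armLengths d := by
  ext L
  simp only [armLengths, mem_ofPred_eq, hf.exists, isBranchPoint_comp_iff hf h,
    isArmTip_comp_iff hf h, h]

theorem pseudoMetric_congr_left (d : PseudoMetric S ℝ) {x y : S} (h : d x y = 0) (z : S) :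
    d x z = d y z := by
  linarith [d.triangle x y z, d.triangle y x z, d.symm x y]

theorem isArmTip_congr_left (d : PseudoMetric S ℝ) {q q' t : S} (h : d q q' = 0) :
    IsArmTip d q t ↔ IsArmTip d q' t := by
  simp only [IsArmTip, MetricBtw, pseudoMetric_congr_left d h]

theorem MetricBtw.sub_mul_sub_nonpos {x y m : ℝ} (h : MetricBtw dist x m y) :
    (x - m) * (y - m) ≤ 0 := by
  have hsq : |x - y| ^ 2 = (|x - m| + |m - y|) ^ 2 := congrArg (· ^ 2) h
  rw [add_sq, sq_abs, sq_abs, sq_abs] at hsq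
  nlinarith [mul_nonneg (abs_nonneg (x - m)) (abs_nonneg (m - y))]

theorem not_isBranchPoint_real (q : ℝ) : ¬ IsBranchPoint dist q := by
  rintro ⟨x, hx, hbtw⟩
  have hne : ∀ i, x i - q ≠ 0 := fun i => sub_ne_zero.2 (dist_ne_zero.1 (hx i)).symm
  have h01 := (hbtw (show (0 : Fin 3) ≠ 1 by decide)).sub_mul_sub_nonpos
  have h12 := (hbtw (show (1 : Fin 3) ≠ 2 by decide)).sub_mul_sub_nonpos
  have h02 := (hbtw (show (0 : Fin 3) ≠ 2 by decide)).sub_mul_sub_nonpos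
  -- Three nonzero reals cannot have pairwise opposite signs: their pairwise products multiply to
  -- a square.
  have hsq : 0 < ((x 0 - q) * (x 1 - q) * (x 2 - q)) ^ 2 :=
    sq_pos_of_ne_zero (mul_ne_zero (mul_ne_zero (hne 0) (hne 1)) (hne 2))
  linarith [mul_nonpos_of_nonpos_of_nonneg h01 (mul_nonneg_of_nonpos_of_nonpos h12 h02)]

end Betweenness

section WeightedSum

variable {κ : Type*} {M : κ → Type*} [∀ k, PseudoMetricSpace (M k)] {w : κ → ℝ≥0}

/-- The weighted `ℓ¹` sum of the distances of the factors of a product. -/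
noncomputable def weightedSum (w : κ → ℝ≥0)
    (hw : ∀ x y : ∀ k, M k, Summable fun k => w k * dist (x k) (y k)) :
    PseudoMetric (∀ k, M k) ℝ where
  toFun x y := ∑' k, w k * dist (x k) (y k)
  refl' x := by simp only [dist_self, mul_zero, tsum_zero]
  symm' x y := by simp only [dist_comm]
  triangle' x y z := by
    rw [← (hw x y).tsum_add (hw y z)]
    refine (hw x z).tsum_le_tsum (fun k => ?_) ((hw x y).add (hw y z))
    rw [← mul_add]
    exact mul_le_mul_of_nonneg_left (dist_triangle _ _ _) (w k).2

variable {hw : ∀ x y : ∀ k, M k, Summable fun k => w k * dist (x k) (y k)}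

theorem weightedSum_apply (x y : ∀ k, M k) :
    weightedSum w hw x y = ∑' k, w k * dist (x k) (y k) :=
  rfl

theorem weightedSum_apply_of_eq_off {k : κ} {x y : ∀ k, M k} (hxy : ∀ j ≠ k, x j = y j) :
    weightedSum w hw x y = w k * dist (x k) (y k) :=
  tsum_eq_single k fun j hj => by rw [hxy j hj, dist_self, mul_zero]

theorem weightedSum_eq_zero_iff (hpos : ∀ k, 0 < w k) {x y : ∀ k, M k} :
    weightedSum w hw x y = 0 ↔ ∀ k, dist (x k) (y k) = 0 := by
  have hnonneg : 0 ≤ fun k => (w k : ℝ) * dist (x k) (y k) := fun k =>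
    mul_nonneg (w k).2 dist_nonneg
  rw [weightedSum_apply, ← (hw x y).hasSum_iff, hasSum_zero_iff_of_nonneg hnonneg, funext_iff]
  exact forall_congr' fun k => mul_eq_zero_iff_left (NNReal.coe_pos.2 (hpos k)).ne'

theorem metricBtw_weightedSum_iff (hpos : ∀ k, 0 < w k) {x y z : ∀ k, M k} :
    MetricBtw (weightedSum w hw) x y z ↔ ∀ k, MetricBtw dist (x k) (y k) (z k) := by
  have hle : ∀ k, w k * dist (x k) (z k) ≤ w k * dist (x k) (y k) + w k * dist (y k) (z k) :=
    fun k => by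
      rw [← mul_add]
      exact mul_le_mul_of_nonneg_left (dist_triangle _ _ _) (w k).2
  rw [MetricBtw, weightedSum_apply, weightedSum_apply, weightedSum_apply,
    ← (hw x y).tsum_add (hw y z)]
  constructor
  · intro h k
    by_contra hk
    refine (Summable.tsum_lt_tsum hle (i := k) ?_ (hw x z) ((hw x y).add (hw y z))).ne h
    rw [← mul_add]
    exact mul_lt_mul_of_pos_left ((dist_triangle _ _ _).lt_of_ne hk) (hpos k)
  · intro h
    exact tsum_congr fun k => by rw [h k, mul_add]

end WeightedSum

theorem summable_mul_dist_unitInterval {κ : Type*} {w : κ → ℝ≥0} (hw : Summable w)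
    (t u : κ → I) : Summable fun k => w k * dist (t k) (u k) :=
  .of_nonneg_of_le (fun k => mul_nonneg (w k).2 dist_nonneg)
    (fun k => mul_le_of_le_one_right (w k).2 (Real.dist_le_of_mem_Icc_01 (t k).2 (u k).2))
    (NNReal.summable_coe.2 hw)

section Damp

variable {Y : Type*}

theorem div_one_add_mul_le_div_one_add_mul {r u v : ℝ} (hr : 0 ≤ r) (hu : 0 ≤ u) (huv : u ≤ v) :
    u / (1 + r * u) ≤ v / (1 + r * v) := by
  have hv := hu.trans huv
  rw [div_le_div_iff₀ (by positivity) (by positivity)]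
  linarith

/-- The pseudometric `δ / (1 + r δ)`. For `r = 0` this is `δ`, while for `r > 0` the strict
concavity of `u / (1 + r u)` destroys all nontrivial betweenness. -/
noncomputable def damp (r : ℝ≥0) (δ : PseudoMetric Y ℝ) : PseudoMetric Y ℝ where
  toFun x y := δ x y / (1 + r * δ x y)
  refl' x := by rw [δ.refl, zero_div]
  symm' x y := by rw [δ.symm]
  triangle' x y z := by
    have hxy := δ.nonneg x y
    have hyz := δ.nonneg y z
    have hr := r.coe_nonneg
    refine (div_one_add_mul_le_div_one_add_mul hr (δ.nonneg x z) (δ.triangle x y z)).trans ?_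
    rw [add_div]
    exact add_le_add
      (div_le_div_of_nonneg_left hxy (by positivity) (by gcongr; linarith only [hxy, hyz]))
      (div_le_div_of_nonneg_left hyz (by positivity) (by gcongr; linarith only [hxy, hyz]))

theorem damp_apply (r : ℝ≥0) (δ : PseudoMetric Y ℝ) (x y : Y) :
    damp r δ x y = δ x y / (1 + r * δ x y) :=
  rfl

theorem eq_zero_or_eq_zero_of_metricBtw_damp {r : ℝ≥0} (hr : 0 < r) {δ : PseudoMetric Y ℝ}
    {x y z : Y} (h : MetricBtw (damp r δ) x y z) : damp r δ x y = 0 ∨ damp r δ y z = 0 := by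
  by_contra! hne
  have pos : ∀ a b, damp r δ a b ≠ 0 → 0 < δ a b := fun a b hab =>
    (δ.nonneg a b).lt_of_ne' fun h0 => hab (by rw [damp_apply, h0, zero_div])
  have hxy := pos x y hne.1
  have hyz := pos y z hne.2
  have hlt : damp r δ x z < damp r δ x y + damp r δ y z :=
    calc damp r δ x z ≤ (δ x y + δ y z) / (1 + r * (δ x y + δ y z)) :=
          div_one_add_mul_le_div_one_add_mul r.2 (δ.nonneg x z) (δ.triangle x y z)
      _ = δ x y / (1 + r * (δ x y + δ y z)) + δ y z / (1 + r * (δ x y + δ y z)) := add_div _ _ _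
      _ < δ x y / (1 + r * δ x y) + δ y z / (1 + r * δ y z) := by
          gcongr <;> linarith
  exact hlt.ne h

end Damp

section StarWedge

variable {Y κ : Type*} {p : Y}

/-- The wedge at `p` of `Y` with `κ` many arms `[0, 1]`, inside the product `Y × (κ → [0, 1])`:
the tuples with at most one coordinate off the wedge point. -/
def starWedge (p : Y) (κ : Type*) : Set (Y × (κ → I)) :=
  {z | (∀ k, z.2 k = 0 ∨ z.1 = p) ∧ Pairwise fun j k => z.2 j = 0 ∨ z.2 k = 0}

namespace starWedge

/-- The inclusion of `Y` into the wedge. -/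
def incl (p : Y) (κ : Type*) (y : Y) : starWedge p κ :=
  ⟨(y, 0), fun _ => .inl rfl, fun _ _ _ => .inl rfl⟩

theorem single_mem [DecidableEq κ] (k : κ) (s : I) : (p, Pi.single k s) ∈ starWedge p κ := by
  refine ⟨fun _ => .inr rfl, fun i j hij => ?_⟩
  rcases eq_or_ne i k with rfl | hi
  · exact .inr (Pi.single_eq_of_ne (M := fun _ => I) hij.symm s)
  · exact .inl (Pi.single_eq_of_ne (M := fun _ => I) hi s)

/-- The `k`-th arm of the wedge, parametrized from the wedge point. -/
def arm [DecidableEq κ] (p : Y) (k : κ) (s : I) : starWedge p κ :=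
  ⟨(p, Pi.single k s), single_mem k s⟩

theorem arm_zero [DecidableEq κ] (k : κ) : arm p k 0 = incl p κ p :=
  Subtype.ext (Prod.ext rfl (Pi.single_zero k))

theorem eq_arm [DecidableEq κ] {x : starWedge p κ} {k : κ} (hk : x.1.2 k ≠ 0) :
    x = arm p k (x.1.2 k) := by
  refine Subtype.ext (Prod.ext ((x.2.1 k).resolve_left hk) (funext fun j => ?_))
  rcases eq_or_ne j k with rfl | hj
  · exact (Pi.single_eq_same (M := fun _ => I) j _).symm
  · exact ((x.2.2 hj).resolve_right hk).trans (Pi.single_eq_of_ne (M := fun _ => I) hj _).symm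

theorem eq_incl {x : starWedge p κ} (hx : x.1.2 = 0) : x = incl p κ x.1.1 :=
  Subtype.ext (Prod.ext rfl hx)

variable [TopologicalSpace Y]

instance [T2Space Y] [CompactSpace Y] : CompactSpace (starWedge p κ) := by
  have hclosed : IsClosed (starWedge p κ) := by
    simp only [starWedge, Pairwise, ofPred_and, ofPred_forall, ofPred_or]
    refine .inter (isClosed_iInter fun k => ?_) (isClosed_iInter fun j => isClosed_iInter fun k =>
      isClosed_iInter fun _ => ?_)
    · exact (isClosed_eq (by fun_prop) continuous_const).union
        (isClosed_eq continuous_fst continuous_const)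
    · exact (isClosed_eq (by fun_prop) continuous_const).union
        (isClosed_eq (by fun_prop) continuous_const)
  exact isCompact_iff_compactSpace.1 hclosed.isCompact

theorem continuous_incl : Continuous (incl p κ) :=
  .subtype_mk (continuous_id.prodMk continuous_const) _

theorem continuous_arm [DecidableEq κ] (k : κ) : Continuous (arm p k) :=
  .subtype_mk (continuous_const.prodMk (continuous_single (A := fun _ => I) k)) _

instance [PathConnectedSpace Y] : PathConnectedSpace (starWedge p κ) := by
  classical
  have : PathConnectedSpace I := isPathConnected_iff_pathConnectedSpace.1
    ((convex_Icc (0 : ℝ) 1).isPathConnected (nonempty_Icc.2 zero_le_one))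
  have joined_base : ∀ x : starWedge p κ, Joined (incl p κ p) x := fun x => by
    by_cases hx : x.1.2 = 0
    · rw [eq_incl hx]
      exact (PathConnectedSpace.joined p x.1.1).map continuous_incl
    · obtain ⟨k, hk⟩ := ne_iff.1 hx
      rw [eq_arm hk, ← arm_zero k]
      exact (PathConnectedSpace.joined 0 (x.1.2 k)).map (continuous_arm k)
  exact ⟨⟨incl p κ p⟩, fun x y => (joined_base x).symm.trans (joined_base y)⟩

end starWedge

end StarWedge

section WedgeMetric

open starWedge

variable {Y κ : Type*} {p : Y} {δ : PseudoMetric Y ℝ} {w : κ → ℝ≥0} {hw : Summable w}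

/-- The metric of the wedge at `p` of `(Y, δ)` with arms of lengths `w k`. -/
noncomputable def wedgeMetric (p : Y) (δ : PseudoMetric Y ℝ) (w : κ → ℝ≥0) (hw : Summable w) :
    PseudoMetric (starWedge p κ) ℝ where
  toFun x y := δ x.1.1 y.1.1 + weightedSum w (summable_mul_dist_unitInterval hw) x.1.2 y.1.2
  refl' x := by rw [δ.refl, PseudoMetric.refl, add_zero]
  symm' x y := by rw [δ.symm, (weightedSum w _).symm]
  triangle' x y z := by
    rw [add_add_add_comm]
    exact add_le_add (δ.triangle _ _ _) (PseudoMetric.triangle _ _ _ _)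

theorem wedgeMetric_apply (x y : starWedge p κ) :
    wedgeMetric p δ w hw x y =
      δ x.1.1 y.1.1 + weightedSum w (summable_mul_dist_unitInterval hw) x.1.2 y.1.2 :=
  rfl

theorem wedgeMetric_eq_zero_iff (hpos : ∀ k, 0 < w k) {x y : starWedge p κ} :
    wedgeMetric p δ w hw x y = 0 ↔ δ x.1.1 y.1.1 = 0 ∧ x.1.2 = y.1.2 := by
  rw [wedgeMetric_apply, add_eq_zero_iff_of_nonneg (δ.nonneg _ _) (PseudoMetric.nonneg _ _ _),
    weightedSum_eq_zero_iff hpos, funext_iff]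
  simp only [dist_eq_zero]

theorem metricBtw_wedgeMetric_iff (hpos : ∀ k, 0 < w k) {x y z : starWedge p κ} :
    MetricBtw (wedgeMetric p δ w hw) x y z ↔
      MetricBtw δ x.1.1 y.1.1 z.1.1 ∧ ∀ k, MetricBtw dist (x.1.2 k) (y.1.2 k) (z.1.2 k) := by
  rw [← metricBtw_weightedSum_iff (hw := summable_mul_dist_unitInterval hw) hpos]
  simp only [MetricBtw, wedgeMetric_apply]
  rw [add_add_add_comm]
  exact add_eq_add_iff_eq_and_eq (δ.triangle _ _ _) (PseudoMetric.triangle _ _ _ _)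

theorem wedgeMetric_arm_arm [DecidableEq κ] (k : κ) (s t : I) :
    wedgeMetric p δ w hw (arm p k s) (arm p k t) = w k * dist s t := by
  have off : ∀ j ≠ k, (Pi.single k s : κ → I) j = (Pi.single k t : κ → I) j := fun j hj => by
    rw [Pi.single_eq_of_ne hj, Pi.single_eq_of_ne hj]
  rw [wedgeMetric_apply, arm, arm, δ.refl, zero_add, weightedSum_apply_of_eq_off off,
    Pi.single_eq_same, Pi.single_eq_same]

theorem wedgeMetric_incl_arm_one [DecidableEq κ] (k : κ) :
    wedgeMetric p δ w hw (incl p κ p) (arm p k 1) = w k := by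
  rw [← arm_zero k, wedgeMetric_arm_arm, Subtype.dist_eq, dist_comm, Real.dist_eq]
  norm_num

theorem metricBtw_arm [DecidableEq κ] (k : κ) {s t u : I} (hst : s ≤ t) (htu : t ≤ u) :
    MetricBtw (wedgeMetric p δ w hw) (arm p k s) (arm p k t) (arm p k u) := by
  rw [MetricBtw, wedgeMetric_arm_arm, wedgeMetric_arm_arm, wedgeMetric_arm_arm, ← mul_add]
  simp only [Subtype.dist_eq]
  have hmem : (t : ℝ) ∈ segment ℝ (s : ℝ) u := Icc_subset_segment ⟨hst, htu⟩
  rw [dist_add_dist_of_mem_segment hmem]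

theorem isBranchPoint_incl (hpos : ∀ k, 0 < w k) (f : Fin 3 ↪ κ) :
    IsBranchPoint (wedgeMetric p δ w hw) (incl p κ p) := by
  classical
  refine ⟨fun i => arm p (f i) 1, fun i => ?_, fun i j hij => ?_⟩
  · rw [wedgeMetric_incl_arm_one]
    exact (NNReal.coe_pos.2 (hpos _)).ne'
  · refine (metricBtw_wedgeMetric_iff hpos).2 ⟨?_, fun l => ?_⟩
    · simp only [MetricBtw, arm, incl, δ.refl, add_zero]
    · have hsep : (Pi.single (f i) 1 : κ → I) l = 0 ∨ (Pi.single (f j) 1 : κ → I) l = 0 := by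
        rcases eq_or_ne l (f i) with rfl | hl
        · exact .inr (Pi.single_eq_of_ne (f.injective.ne hij) _)
        · exact .inl (Pi.single_eq_of_ne hl _)
      rcases hsep with h | h <;> simp [MetricBtw, arm, incl, h]

theorem IsBranchPoint.wedgeMetric_incl_eq_zero (hpos : ∀ k, 0 < w k)
    (hδ : ∀ x y z, MetricBtw δ x y z → δ x y = 0 ∨ δ y z = 0) {q : starWedge p κ}
    (hq : IsBranchPoint (wedgeMetric p δ w hw) q) :
    wedgeMetric p δ w hw q (incl p κ p) = 0 := by
  classical
  obtain ⟨x, hx, hbtw⟩ := hq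
  have btw : ∀ i j, i ≠ j → _ := fun i j hij => (metricBtw_wedgeMetric_iff hpos).1 (hbtw hij)
  have arms_zero : q.1.2 = 0 := by
    by_contra hq
    obtain ⟨k, hk⟩ := ne_iff.1 hq
    refine not_isBranchPoint_real (q.1.2 k) ⟨fun i => (x i).1.2 k, fun i h0 => hx i ?_,
      fun i j hij => (btw i j hij).2 k⟩
    have hxk : q.1.2 k = (x i).1.2 k := Subtype.ext (dist_eq_zero.1 h0)
    rw [(eq_arm hk).trans (hxk ▸ (eq_arm (hxk ▸ hk)).symm), PseudoMetric.refl]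
  have exists_zero : ∃ i, δ q.1.1 (x i).1.1 = 0 := by
    rcases hδ _ _ _ (btw 0 1 (by decide)).1 with h | h
    · exact ⟨0, δ.symm _ _ ▸ h⟩
    · exact ⟨1, h⟩
  obtain ⟨i, hi⟩ := exists_zero
  have hxi : (x i).1.2 ≠ 0 := fun h =>
    hx i ((wedgeMetric_eq_zero_iff hpos).2 ⟨hi, arms_zero.trans h.symm⟩)
  obtain ⟨k, hk⟩ := ne_iff.1 hxi
  refine (wedgeMetric_eq_zero_iff hpos).2 ⟨?_, arms_zero⟩
  rwa [((x i).2.1 k).resolve_left hk] at hi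

theorem isArmTip_incl_arm_one [DecidableEq κ] (hpos : ∀ k, 0 < w k) (k : κ) :
    IsArmTip (wedgeMetric p δ w hw) (incl p κ p) (arm p k 1) := by
  have hwk : (w k : ℝ) ≠ 0 := (NNReal.coe_pos.2 (hpos k)).ne'
  constructor
  · intro x hx
    have hbtw : MetricBtw dist (0 : I) 1 (x.1.2 k) := by
      simpa only [arm, incl, Pi.single_eq_same, Pi.zero_apply] using
        ((metricBtw_wedgeMetric_iff hpos).1 hx).2 k
    have hone : x.1.2 k = 1 := by
      have h : ((0 : ℝ) - 1) * (x.1.2 k - 1) ≤ 0 := hbtw.sub_mul_sub_nonpos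
      exact le_antisymm unitInterval.le_one' (Subtype.coe_le_coe.1 (by rw [Icc.coe_one]; linarith))
    have hx : x = arm p k 1 := hone ▸ eq_arm (hone ▸ one_ne_zero)
    rw [hx, PseudoMetric.refl]
  · obtain ⟨half, h0, h1⟩ := exists_between (zero_lt_one (α := I))
    rw [← arm_zero k]
    refine ⟨arm p k half, ?_, ?_, metricBtw_arm k unitInterval.nonneg' unitInterval.le_one'⟩
    · rw [wedgeMetric_arm_arm]
      exact mul_ne_zero hwk (dist_ne_zero.2 h0.ne)
    · rw [wedgeMetric_arm_arm]
      exact mul_ne_zero hwk (dist_ne_zero.2 h1.ne)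

theorem IsArmTip.exists_wedgeMetric_incl_eq (hpos : ∀ k, 0 < w k)
    (hδ : ∀ x y z, MetricBtw δ x y z → δ x y = 0 ∨ δ y z = 0) {t : starWedge p κ}
    (ht : IsArmTip (wedgeMetric p δ w hw) (incl p κ p) t) :
    ∃ k, wedgeMetric p δ w hw (incl p κ p) t = w k := by
  classical
  obtain ⟨hend, z, hpz, hzt, hbtw⟩ := ht
  rw [metricBtw_wedgeMetric_iff hpos] at hbtw
  have ht : t.1.2 ≠ 0 := fun ht => by
    have hz : z.1.2 = 0 := funext fun k => by
      have hk : MetricBtw dist 0 (z.1.2 k) 0 := by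
        simpa only [incl, ht, Pi.zero_apply] using hbtw.2 k
      have h : ((0 : ℝ) - z.1.2 k) * (0 - z.1.2 k) ≤ 0 := hk.sub_mul_sub_nonpos
      exact Subtype.ext (by simpa using mul_self_eq_zero.1 (h.antisymm (mul_self_nonneg _)))
    rcases hδ _ _ _ hbtw.1 with h | h
    · exact hpz ((wedgeMetric_eq_zero_iff hpos).2 ⟨h, hz.symm⟩)
    · exact hzt ((wedgeMetric_eq_zero_iff hpos).2 ⟨h, hz.trans ht.symm⟩)
  obtain ⟨k, hk⟩ := ne_iff.1 ht
  refine ⟨k, ?_⟩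
  have hbeyond : MetricBtw (wedgeMetric p δ w hw) (incl p κ p) t (arm p k 1) := by
    rw [← arm_zero k, eq_arm hk]
    exact metricBtw_arm k unitInterval.nonneg' unitInterval.le_one'
  rw [← wedgeMetric_incl_arm_one (hw := hw) k, hbeyond, hend _ hbeyond, add_zero]

theorem armLengths_wedgeMetric (hpos : ∀ k, 0 < w k) (f : Fin 3 ↪ κ)
    (hδ : ∀ x y z, MetricBtw δ x y z → δ x y = 0 ∨ δ y z = 0) :
    armLengths (wedgeMetric p δ w hw) = range fun k => (w k : ℝ) := by
  classical
  ext L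
  constructor
  · rintro ⟨q, t, hq, ht, rfl⟩
    have h0 := hq.wedgeMetric_incl_eq_zero hpos hδ
    obtain ⟨k, hk⟩ := ((isArmTip_congr_left _ h0).1 ht).exists_wedgeMetric_incl_eq hpos hδ
    exact ⟨k, by rw [pseudoMetric_congr_left _ h0, hk]⟩
  · rintro ⟨k, rfl⟩
    exact ⟨incl p κ p, arm p k 1, isBranchPoint_incl hpos f, isArmTip_incl_arm_one hpos k,
      wedgeMetric_incl_arm_one k⟩

end WedgeMetric

section ArmWeight

/-- The arm lengths `r 4⁻ᵏ (1 + a k)` encoding the sequence `a` at scale `r`. The factor `4⁻ᵏ` makes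
them strictly decreasing, so that the set of lengths determines the sequence of lengths. -/
noncomputable def armWeight (r : ℝ≥0) (a : ℕ → I) (k : ℕ) : ℝ≥0 :=
  r * ((1 / 4) ^ k * (1 + unitInterval.toNNReal (a k)))

theorem armWeight_pos {r : ℝ≥0} (hr : 0 < r) (a : ℕ → I) (k : ℕ) : 0 < armWeight r a k := by
  unfold armWeight
  positivity

theorem armWeight_le (r : ℝ≥0) (a : ℕ → I) (k : ℕ) : armWeight r a k ≤ r * ((1 / 4) ^ k * 2) := by
  have h : 1 + unitInterval.toNNReal (a k) ≤ 2 :=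
    (add_le_add_right (unitInterval.le_one (a k)) 1).trans_eq one_add_one_eq_two
  exact mul_le_mul_right (mul_le_mul_right h _) _

theorem le_armWeight (r : ℝ≥0) (a : ℕ → I) (k : ℕ) : r * (1 / 4) ^ k ≤ armWeight r a k :=
  mul_le_mul_right (le_mul_of_one_le_right' le_self_add) _

theorem summable_quarter_pow_mul_two : Summable fun k : ℕ => (1 / 4 : ℝ≥0) ^ k * 2 :=
  (NNReal.summable_geometric (NNReal.div_lt_one_of_lt (by norm_num))).mul_right 2

theorem summable_armWeight (r : ℝ≥0) (a : ℕ → I) : Summable (armWeight r a) :=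
  NNReal.summable_of_le (armWeight_le r a) (summable_quarter_pow_mul_two.mul_left r)

theorem continuous_armWeight (r : ℝ≥0) (k : ℕ) : Continuous fun a => armWeight r a k := by
  unfold armWeight
  fun_prop

theorem strictAnti_armWeight {r : ℝ≥0} (hr : 0 < r) (a : ℕ → I) : StrictAnti (armWeight r a) := by
  refine strictAnti_nat_of_succ_lt fun k => ?_
  calc armWeight r a (k + 1) ≤ r * ((1 / 4) ^ (k + 1) * 2) := armWeight_le r a (k + 1)
    _ = r * (1 / 4) ^ k * (1 / 2) := by
      rw [pow_succ]
      ring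
    _ < r * (1 / 4) ^ k :=
      mul_lt_of_lt_one_right (by positivity) ((div_lt_one₀ two_pos).2 one_lt_two)
    _ ≤ armWeight r a k := le_armWeight r a k

/-- The sequence `0, s, a 0, a 1, …`. The leading `0` makes the scale `r` legible from
`armWeight r (mark s a)`, and `s` is a free parameter for avoiding coincidences. -/
def mark (s : I) (a : ℕ → I) : ℕ → I
  | 0 => 0
  | 1 => s
  | k + 2 => a k

theorem continuous_mark (s : I) : Continuous (mark s) :=
  continuous_pi fun
    | 0 => continuous_const
    | 1 => continuous_const
    | k + 2 => continuous_apply k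

theorem mark_eq_of_range_armWeight_eq {r r' : ℝ≥0} (hr : 0 < r) (hr' : 0 < r') {s s' : I}
    {a a' : ℕ → I} (h : range (fun k => (armWeight r (mark s a) k : ℝ)) =
      range fun k => (armWeight r' (mark s' a') k : ℝ)) : s = s' ∧ a = a' := by
  have anti : ∀ {r a}, 0 < r → StrictAnti fun k => (armWeight r a k : ℝ) := fun hr =>
    fun _ _ hkl => NNReal.coe_lt_coe.2 (strictAnti_armWeight hr _ hkl)
  have hw : ∀ k, armWeight r (mark s a) k = armWeight r' (mark s' a') k := fun k =>
    NNReal.coe_injective (congrFun (((anti hr).dual_right.range_inj (anti hr').dual_right).1 h) k)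
  obtain rfl : r = r' := by simpa [armWeight, mark] using hw 0
  have hmark : mark s a = mark s' a' := funext fun k => by
    have h : unitInterval.toNNReal (mark s a k) = unitInterval.toNNReal (mark s' a' k) := by
      simpa [armWeight, hr.ne'] using hw k
    exact Subtype.ext (congrArg NNReal.toReal h)
  exact ⟨congrFun hmark 1, funext fun k => congrFun hmark (k + 2)⟩

theorem exists_marker {ι : Type*} [Finite ι] (A : ι → Set ℝ) :
    ∃ s : I, ∀ i r a, 0 < r → A i ≠ range fun k => (armWeight r (mark s a) k : ℝ) := by
  let bad : ι → Set I := fun i =>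
    {s | ∃ r a, 0 < r ∧ A i = range fun k => (armWeight r (mark s a) k : ℝ)}
  have : Infinite I := (Icc_infinite zero_lt_one).to_subtype
  have hbad : (⋃ i, bad i).Finite := finite_iUnion fun i => Set.Subsingleton.finite <| by
    rintro s ⟨r, a, hr, h⟩ s' ⟨r', a', hr', h'⟩
    exact (mark_eq_of_range_armWeight_eq hr hr' (h.symm.trans h')).1
  obtain ⟨s, hs⟩ := hbad.exists_notMem
  exact ⟨s, fun i r a hr h => hs (mem_iUnion.2 ⟨i, r, a, hr, h⟩)⟩

end ArmWeight

section Interpolation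

variable {ι : Type*} [Finite ι] {X : ι → Type*} [∀ i, MetricSpace (X i)]

/-- The metric interpolating between the spaces `X i`: on `∏ i, X i` it is the `c`-weighted sum of
the distances damped by `r`, and arms of lengths `armWeight r a` are attached at `p`. It is `dist`
on the factor `X i` for `r = 0` and `c = Pi.single i 1`, whereas for `r > 0` its arm lengths reveal
`a`. -/
noncomputable def interpolationMetric (p : ∀ i, X i) (τ : ℝ≥0 × (ι → ℝ≥0) × (ℕ → I)) :
    PseudoMetric (starWedge p ℕ) ℝ :=
  wedgeMetric p (damp τ.1 (weightedSum τ.2.1 fun _ _ => .of_finite)) (armWeight τ.1 τ.2.2)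
    (summable_armWeight _ _)

theorem continuous_interpolationMetric (p : ∀ i, X i) :
    Continuous fun z : (ℝ≥0 × (ι → ℝ≥0) × (ℕ → I)) × starWedge p ℕ × starWedge p ℕ =>
      interpolationMetric p z.1 z.2.1 z.2.2 := by
  cases nonempty_fintype ι
  refine .add ?_ ?_
  · have hsum : Continuous fun z : (ℝ≥0 × (ι → ℝ≥0) × (ℕ → I)) × starWedge p ℕ × starWedge p ℕ =>
        weightedSum z.1.2.1 (fun _ _ => .of_finite) z.2.1.1.1 z.2.2.1.1 := by
      simp only [weightedSum_apply, tsum_fintype]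
      fun_prop
    refine hsum.div (by fun_prop) fun z => ?_
    have := PseudoMetric.nonneg (weightedSum z.1.2.1 fun _ _ => .of_finite) z.2.1.1.1 z.2.2.1.1
    positivity
  · have hscale : ∀ z : (ℝ≥0 × (ι → ℝ≥0) × (ℕ → I)) × starWedge p ℕ × starWedge p ℕ,
        weightedSum (armWeight z.1.1 z.1.2.2)
            (summable_mul_dist_unitInterval (summable_armWeight _ _)) z.2.1.1.2 z.2.2.1.2 =
          z.1.1 * ∑' k, armWeight 1 z.1.2.2 k * dist (z.2.1.1.2 k) (z.2.2.1.2 k) := fun z => by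
      simp only [weightedSum_apply, armWeight, one_mul, NNReal.coe_mul, mul_assoc, tsum_mul_left]
    rw [funext hscale]
    refine .mul (by fun_prop) (continuous_tsum (fun k => ?_)
      (NNReal.summable_coe.2 summable_quarter_pow_mul_two) fun k z => ?_)
    · exact (NNReal.continuous_coe.comp ((continuous_armWeight 1 k).comp (by fun_prop))).mul
        (by fun_prop)
    · rw [Real.norm_of_nonneg (by positivity)]
      refine (mul_le_of_le_one_right (by positivity) ?_).trans ?_
      · exact Real.dist_le_of_mem_Icc_01 (Subtype.prop _) (Subtype.prop _)
      · exact_mod_cast (armWeight_le 1 z.1.2.2 k).trans_eq (one_mul _)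

theorem interpolationMetric_single [DecidableEq ι] (p : ∀ i, X i) (i : ι) (a : ℕ → I)
    (x y : starWedge p ℕ) :
    interpolationMetric p (0, Pi.single i 1, a) x y = dist (x.1.1 i) (y.1.1 i) := by
  have hsum : weightedSum (Pi.single i 1) (fun _ _ => .of_finite) x.1.1 y.1.1 =
      dist (x.1.1 i) (y.1.1 i) := by
    rw [weightedSum_apply, tsum_eq_single i fun j hj => by
      rw [Pi.single_eq_of_ne hj, NNReal.coe_zero, zero_mul],
      Pi.single_eq_same, NNReal.coe_one, one_mul]
  rw [interpolationMetric, wedgeMetric_apply, damp_apply, hsum, weightedSum_apply]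
  simp only [armWeight, zero_mul, NNReal.coe_zero, tsum_zero, add_zero, div_one]

theorem armLengths_interpolationMetric (p : ∀ i, X i) {r : ℝ≥0} (hr : 0 < r) (c : ι → ℝ≥0)
    (a : ℕ → I) :
    armLengths (interpolationMetric p (r, c, a)) = range fun k => (armWeight r a k : ℝ) :=
  armLengths_wedgeMetric (armWeight_pos hr a) Fin.valEmbedding fun _ _ _ =>
    eq_zero_or_eq_zero_of_metricBtw_damp hr

theorem exists_continuous_interpolation [DecidableEq ι] [∀ i, CompactSpace (X i)]
    [∀ i, PathConnectedSpace (X i)] :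
    ∃ Ψ : ℝ≥0 × (ι → ℝ≥0) × (ℕ → I) → GHSpace, Continuous Ψ ∧
      (∀ τ, PathConnectedSpace (Ψ τ).Rep) ∧
      (∀ i a, Ψ (0, Pi.single i 1, a) = toGHSpace (X i)) ∧
      ∀ r c a, 0 < r → armLengths (dist : (Ψ (r, c, a)).Rep → _ → ℝ) =
        range fun k => (armWeight r a k : ℝ) := by
  let p : ∀ i, X i := fun i => Classical.arbitrary (X i)
  obtain ⟨Ψ, hΨ, hrep⟩ := exists_continuous_toGHSpace_of_pseudoMetric (interpolationMetric p)
    (continuous_interpolationMetric p)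
  refine ⟨Ψ, hΨ, fun τ => ?_, fun i a => ?_, fun r c a hr => ?_⟩
  · obtain ⟨f, hf, hsurj, -⟩ := hrep τ
    exact hsurj.pathConnectedSpace hf
  · obtain ⟨f, -, hsurj, hdist⟩ := hrep (0, Pi.single i 1, a)
    have heval : Surjective fun x : starWedge p ℕ => x.1.1 i := fun y =>
      ⟨starWedge.incl p ℕ (update p i y), update_self i y p⟩
    rw [← (Ψ _).toGHSpace_rep]
    exact toGHSpace_eq_of_dist_eq hsurj heval fun x y =>
      (hdist x y).trans (interpolationMetric_single p i a x y)
  · obtain ⟨f, -, hsurj, hdist⟩ := hrep (r, c, a)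
    rw [armLengths_eq_of_surjective hsurj hdist, armLengths_interpolationMetric p hr]

end Interpolation

section Embedding

variable {H ι : Type*} [TopologicalSpace H] [Finite ι]

theorem exists_continuous_eq_zero_iff_mem_range [TopologicalSpace.MetrizableSpace H] (v : ι → H) :
    ∃ ρ : C(H, ℝ≥0), ∀ h, ρ h = 0 ↔ h ∈ range v := by
  cases nonempty_fintype ι
  let := TopologicalSpace.metrizableSpaceMetric H
  refine ⟨⟨fun h => ∏ i, nndist h (v i), by fun_prop⟩, fun h => ?_⟩
  simp only [ContinuousMap.coe_mk, Finset.prod_eq_zero_iff, Finset.mem_univ, true_and,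
    nndist_eq_zero, mem_range, eq_comm (a := h)]

theorem exists_continuous_single [DecidableEq ι] [T4Space H] {v : ι → H} (hv : Injective v) :
    ∃ c : C(H, ι → ℝ≥0), ∀ i, c (v i) = Pi.single i 1 := by
  let _ : TopologicalSpace ι := ⊥
  have : DiscreteTopology ι := ⟨rfl⟩
  have hemb : IsClosedEmbedding v := continuous_of_discreteTopology.isClosedEmbedding hv
  obtain ⟨c, hc⟩ := ContinuousMap.exists_extension hemb
    ⟨fun i => (Pi.single i 1 : ι → ℝ≥0), continuous_of_discreteTopology⟩
  exact ⟨c, fun i => DFunLike.congr_fun hc i⟩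

theorem exists_continuous_armWeight_injOn [CompactSpace H] [TopologicalSpace.MetrizableSpace H]
    (v : ι → H) (A : ι → Set ℝ) :
    ∃ (ρ : C(H, ℝ≥0)) (a : C(H, ℕ → I)), (∀ h, ρ h = 0 ↔ h ∈ range v) ∧
      InjOn (fun h => range fun k => (armWeight (ρ h) (a h) k : ℝ)) (range v)ᶜ ∧
      ∀ i, ∀ h ∉ range v, A i ≠ range fun k => (armWeight (ρ h) (a h) k : ℝ) := by
  let := TopologicalSpace.metrizableSpaceMetric H
  obtain ⟨ρ, hρ⟩ := exists_continuous_eq_zero_iff_mem_range v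
  obtain ⟨e, he⟩ := Metric.PiNatEmbed.exists_embedding_to_hilbert_cube (X := H)
  obtain ⟨s, hs⟩ := exists_marker A
  have hpos : ∀ h ∉ range v, 0 < ρ h := fun h hh => pos_iff_ne_zero.2 (mt (hρ h).1 hh)
  refine ⟨ρ, ⟨fun h => mark s (e h), (continuous_mark s).comp he.continuous⟩, hρ, ?_, ?_⟩
  · exact fun h hh h' hh' heq =>
      he.injective (mark_eq_of_range_armWeight_eq (hpos h hh) (hpos h' hh') heq).2
  · exact fun i h hh => hs i _ _ (hpos h hh)

theorem statement1_general [CompactSpace H] [TopologicalSpace.MetrizableSpace H] {v : ι → H}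
    (hv : Injective v) (X : ι → Type*) [∀ i, MetricSpace (X i)] [∀ i, CompactSpace (X i)]
    [∀ i, Nonempty (X i)] (hpconn : ∀ i, PathConnectedSpace (X i))
    (hdist : ∀ i j, i ≠ j → 0 < ghDist (X i) (X j)) :
    ∃ Φ : H → GHSpace, IsEmbedding Φ ∧ (∀ h, PathConnectedSpace (Φ h).Rep) ∧
      ∀ i, Φ (v i) = toGHSpace (X i) := by
  classical
  let invariant : GHSpace → Set ℝ := fun g => armLengths (dist : g.Rep → g.Rep → ℝ)
  obtain ⟨Ψ, hΨ, hconn, hX, harm⟩ := exists_continuous_interpolation (X := X)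
  obtain ⟨ρ, a, hρ, ha, havoid⟩ :=
    exists_continuous_armWeight_injOn v fun i => invariant (toGHSpace (X i))
  obtain ⟨c, hc⟩ := exists_continuous_single hv
  let Φ : H → GHSpace := fun h => Ψ (ρ h, c h, a h)
  have hΦv : ∀ i, Φ (v i) = toGHSpace (X i) := fun i => by
    simp only [Φ, hc, (hρ _).2 (mem_range_self i), hX]
  have hΦarm : ∀ h ∉ range v, invariant (Φ h) = range fun k => (armWeight (ρ h) (a h) k : ℝ) :=
    fun h hh => harm _ _ _ (pos_iff_ne_zero.2 (mt (hρ h).1 hh))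
  have hne : ∀ i, ∀ h ∉ range v, Φ (v i) ≠ Φ h := fun i h hh heq =>
    havoid i h hh (by rw [← hΦv, heq, hΦarm h hh])
  have hinj : Injective Φ := fun h h' heq => by
    by_cases hh : h ∈ range v <;> by_cases hh' : h' ∈ range v
    · obtain ⟨⟨i, rfl⟩, ⟨j, rfl⟩⟩ := And.intro hh hh'
      by_contra hij
      refine (hdist i j fun h => hij (congrArg v h)).ne' ?_
      rw [ghDist, ← hΦv, ← hΦv, heq, dist_self]
    · exact hh.elim fun i hi => absurd (hi ▸ heq) (hne i h' hh')
    · exact hh'.elim fun i hi => absurd (hi ▸ heq.symm) (hne i h hh)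
    · exact ha hh hh' ((hΦarm h hh).symm.trans ((congrArg invariant heq).trans (hΦarm h' hh')))
  have hcont : Continuous Φ := hΨ.comp (by fun_prop)
  exact ⟨Φ, (hcont.isClosedEmbedding hinj).isEmbedding, fun h => hconn _, hΦv⟩

end Embedding

/-- Let `H` be a compact metrizable space, `n ≥ 1`, and
`v 0, …, v n` be `n+1` distinct points of `H`.  Let `X 0, …, X n` be compact
path-connected (nonempty) metric spaces with positive pairwise Gromov–Hausdorff
distances.  Then there is a topological embedding `Φ` of `H` into the subset
`𝒞` of the Gromov–Hausdorff space consisting of path-connected compact metric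
spaces (i.e. an embedding into the Gromov–Hausdorff space whose range consists
of connected spaces) such that `Φ (v i)` is the isometry class of `X i`. -/
theorem statement1 {H : Type*} [TopologicalSpace H] [CompactSpace H]
    [TopologicalSpace.MetrizableSpace H]
    (n : ℕ) (hn : 1 ≤ n) (v : Fin (n + 1) → H) (hv : Function.Injective v)
    (X : Fin (n + 1) → Type) [∀ i, MetricSpace (X i)] [∀ i, CompactSpace (X i)]
    [∀ i, Nonempty (X i)]
    (hpconn : ∀ i, PathConnectedSpace (X i))
    (hdist : ∀ i j, i ≠ j → 0 < ghDist (X i) (X j)) :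
    ∃ Φ : H → GHSpace,
      Topology.IsEmbedding Φ ∧
      (∀ h : H, PathConnectedSpace (Φ h).Rep) ∧
      ∀ i, Φ (v i) = toGHSpace (X i) :=
  statement1_general hv X hpconn hdist
end

section
/- Let H be a compact metrizable space, let n ≥ 1, and let v_1, …, v_{n+1} be n+1 distinct points of H. Let (X_1,d_1), …, (X_{n+1},d_{n+1}) be compact geodesic metric spaces with d_GH((X_i,d_i),(X_j,d_j)) > 0 for all distinct i, j. Then there exists a topological embedding Φ : H → 𝒢 (into the Gromov–Hausdorff space) such that Φ(v_i) = (X_i,d_i) for every i = 1, …, n+1. -/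
open GromovHausdorff

/-- A metric space is *geodesic* if any two points `x, y` are joined by a
geodesic, i.e. a map `γ : [0,1] → X` with `γ 0 = x`, `γ 1 = y` and
`dist (γ s) (γ t) = |s - t| * dist x y`. -/
def IsGeodesicSpace (X : Type*) [MetricSpace X] : Prop :=
  ∀ x y : X, ∃ γ : ℝ → X, γ 0 = x ∧ γ 1 = y ∧
    ∀ s ∈ Set.Icc (0 : ℝ) 1, ∀ t ∈ Set.Icc (0 : ℝ) 1,
      dist (γ s) (γ t) = |s - t| * dist x y

/-!
On the product of the core `Z = Π i, X i` with a sequence of cubes `[0, 1] ^ M j`, take the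
pseudometric `∑ i, a i h * d (X i) + ∑ j, c j * φ k h * d ([0, 1] ^ M j)`, where `j` encodes a pair
`(k, m)`, and let `Φ h` be its metric quotient. The functions `a i` form the Kronecker delta on the
points `v i`, and the functions `φ k` vanish at these points and separate the others, so that
`Φ (v i)` is `X i`. Degenerate weights cost nothing: a metric quotient of a compact space by a
continuous geodesic pseudometric is compact and geodesic, and depends continuously on the
pseudometric.

For injectivity away from the points `v i`, choose the dimensions so large that the vertices of the
`j`-th cube, which are at mutual distance `1`, cannot be spread out in the core and the preceding
cubes. An isometry `Φ h ≃ Φ h'` must then separate some two of them by the `j`-th and later cubes,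
so `c j * φ k h ≤ c j * φ k h' + O (c j ^ 2)` when the tails of `c` are quadratically small.
Dividing by `c j` and letting `m → ∞` gives `φ k h ≤ φ k h'`, and symmetry gives equality.
-/

open Set Filter Topology Metric TopologicalSpace

theorem IsGeodesicSpace.of_isometryEquiv {X Y : Type*} [MetricSpace X] [MetricSpace Y]
    (hX : IsGeodesicSpace X) (e : X ≃ᵢ Y) : IsGeodesicSpace Y := by
  intro x y
  obtain ⟨γ, hγ₀, hγ₁, hγ⟩ := hX (e.symm x) (e.symm y)
  refine ⟨e ∘ γ, by simp [hγ₀], by simp [hγ₁], fun s hs t ht => ?_⟩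
  simpa only [Function.comp_apply, e.dist_eq, e.symm.dist_eq] using hγ s hs t ht

theorem isGeodesicSpace_of_convex {E : Type*} [NormedAddCommGroup E] [NormedSpace ℝ E] {s : Set E}
    (hs : Convex ℝ s) : IsGeodesicSpace s := by
  intro x y
  refine ⟨fun t => ⟨AffineMap.lineMap (x : E) y (projIcc (0 : ℝ) 1 zero_le_one t : ℝ),
    hs.lineMap_mem x.2 y.2 (projIcc _ _ _ t).2⟩, by simp, by simp, fun t ht u hu => ?_⟩
  simp only [Subtype.dist_eq, dist_lineMap_lineMap, projIcc_of_mem _ ht, projIcc_of_mem _ hu,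
    Real.dist_eq]

/-- A pseudometric on the points of a topological space `K` which is continuous as a function on
`K × K`. The topology of `K` need not be the one induced by the pseudometric. -/
structure ContinuousPseudoMetric (K : Type*) [TopologicalSpace K] extends PseudoMetric K ℝ where
  continuous' : Continuous (Function.uncurry toFun)

namespace ContinuousPseudoMetric

variable {K L : Type*} [TopologicalSpace K] [TopologicalSpace L]

instance : CoeFun (ContinuousPseudoMetric K) fun _ => K → K → ℝ := ⟨fun ρ => ρ.toFun⟩

/-- The points of `K`, carrying `ρ` as their distance. -/
def Carrier (_ρ : ContinuousPseudoMetric K) : Type _ := K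

instance (ρ : ContinuousPseudoMetric K) : PseudoMetricSpace ρ.Carrier where
  dist := ρ
  dist_self := ρ.refl'
  dist_comm := ρ.symm'
  dist_triangle := ρ.triangle'

/-- The metric space obtained from `K` by identifying points at `ρ`-distance zero. -/
abbrev MetricQuotient (ρ : ContinuousPseudoMetric K) : Type _ := SeparationQuotient ρ.Carrier

/-- The projection of `K` onto the metric quotient by `ρ`. -/
def toQuotient (ρ : ContinuousPseudoMetric K) (x : K) : ρ.MetricQuotient :=
  SeparationQuotient.mk (X := ρ.Carrier) x

theorem dist_toQuotient (ρ : ContinuousPseudoMetric K) (x y : K) :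
    dist (ρ.toQuotient x) (ρ.toQuotient y) = ρ x y := rfl

theorem surjective_toQuotient (ρ : ContinuousPseudoMetric K) : Function.Surjective ρ.toQuotient :=
  SeparationQuotient.surjective_mk (X := ρ.Carrier)

theorem continuous_toQuotient (ρ : ContinuousPseudoMetric K) : Continuous ρ.toQuotient :=
  continuous_iff_continuousAt.2 fun x => tendsto_iff_dist_tendsto_zero.2 <| by
    have hρ : Tendsto (fun y => ρ y x) (𝓝 x) (𝓝 (ρ x x)) :=
      (ρ.continuous'.comp (Continuous.prodMk_left x)).tendsto x
    rwa [ρ.refl'] at hρ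

instance [CompactSpace K] (ρ : ContinuousPseudoMetric K) : CompactSpace ρ.MetricQuotient :=
  ρ.surjective_toQuotient.compactSpace ρ.continuous_toQuotient

instance [Nonempty K] (ρ : ContinuousPseudoMetric K) : Nonempty ρ.MetricQuotient :=
  Nonempty.map ρ.toQuotient ‹_›

/-- `ρ` is geodesic if any two points are joined by a curve that `ρ` measures like a segment. The
curve need not be continuous in the topology of `K`. -/
def IsGeodesic (ρ : ContinuousPseudoMetric K) : Prop :=
  ∀ x y : K, ∃ γ : ℝ → K, γ 0 = x ∧ γ 1 = y ∧
    ∀ s ∈ Icc (0 : ℝ) 1, ∀ t ∈ Icc (0 : ℝ) 1, ρ (γ s) (γ t) = |s - t| * ρ x y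

theorem IsGeodesic.metricQuotient {ρ : ContinuousPseudoMetric K} (hρ : ρ.IsGeodesic) :
    IsGeodesicSpace ρ.MetricQuotient := by
  intro x y
  obtain ⟨x, rfl⟩ := ρ.surjective_toQuotient x
  obtain ⟨y, rfl⟩ := ρ.surjective_toQuotient y
  obtain ⟨γ, rfl, rfl, hγ⟩ := hρ x y
  exact ⟨ρ.toQuotient ∘ γ, rfl, rfl, hγ⟩

section GromovHausdorff

variable [CompactSpace K] [Nonempty K] [CompactSpace L] [Nonempty L]

/-- The point of the Gromov–Hausdorff space represented by the metric quotient of `K` by `ρ`. -/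
noncomputable def ghClass (ρ : ContinuousPseudoMetric K) : GHSpace := toGHSpace ρ.MetricQuotient

theorem IsGeodesic.isGeodesicSpace_rep_ghClass {ρ : ContinuousPseudoMetric K}
    (hρ : ρ.IsGeodesic) : IsGeodesicSpace ρ.ghClass.Rep := by
  obtain ⟨e⟩ := toGHSpace_eq_toGHSpace_iff_isometryEquiv.1 ρ.ghClass.toGHSpace_rep
  exact hρ.metricQuotient.of_isometryEquiv e.symm

theorem ghClass_eq_toGHSpace {X : Type*} [MetricSpace X] [CompactSpace X] [Nonempty X]
    (ρ : ContinuousPseudoMetric K) {f : K → X} (hf : Function.Surjective f)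
    (hdist : ∀ x y, dist (f x) (f y) = ρ x y) : ρ.ghClass = toGHSpace X := by
  let F : ρ.MetricQuotient → X := SeparationQuotient.lift (X := ρ.Carrier) f fun x y hxy =>
    dist_eq_zero.1 ((hdist x y).trans (Metric.inseparable_iff.1 hxy))
  have hF : Isometry F := Isometry.of_dist_eq <|
    SeparationQuotient.surjective_mk.forall₂.2 hdist
  have hFsurj : Function.Surjective F := fun z => (hf z).imp' ρ.toQuotient fun _ h => h
  exact toGHSpace_eq_toGHSpace_iff_isometryEquiv.2
    ⟨IsometryEquiv.mk (Equiv.ofBijective F ⟨hF.injective, hFsurj⟩) hF⟩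

theorem exists_map_eq_of_ghClass_eq {ρ : ContinuousPseudoMetric K} {σ : ContinuousPseudoMetric L}
    (h : ρ.ghClass = σ.ghClass) : ∃ g : K → L, ∀ x y, σ (g x) (g y) = ρ x y := by
  obtain ⟨e⟩ := toGHSpace_eq_toGHSpace_iff_isometryEquiv.1 h
  choose g hg using fun x => σ.surjective_toQuotient (e (ρ.toQuotient x))
  refine ⟨g, fun x y => ?_⟩
  rw [← σ.dist_toQuotient, hg, hg, e.dist_eq, dist_toQuotient]

theorem dist_ghClass_le {ρ σ : ContinuousPseudoMetric K} {ε : ℝ}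
    (h : ∀ x y, |ρ x y - σ x y| ≤ ε) : dist ρ.ghClass σ.ghClass ≤ 3 / 2 * ε := by
  choose r hr using ρ.surjective_toQuotient
  have happrox (x : K) : σ x (r (ρ.toQuotient x)) ≤ ε := by
    have hzero : ρ x (r (ρ.toQuotient x)) = 0 := by
      rw [← ρ.dist_toQuotient, hr, dist_self]
    have := h x (r (ρ.toQuotient x))
    rw [hzero, zero_sub, abs_neg] at this
    exact (le_abs_self _).trans this
  have hgh : ghDist ρ.MetricQuotient σ.MetricQuotient ≤ 0 + ε / 2 + ε := by
    refine ghDist_le_of_approx_subsets (s := univ) (fun p => σ.toQuotient (r p))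
      (fun p => ⟨p, mem_univ p, (dist_self p).le⟩) ?_ fun p q => ?_
    · exact σ.surjective_toQuotient.forall.2 fun x => ⟨⟨ρ.toQuotient x, mem_univ _⟩, happrox x⟩
    · calc |dist p q - dist (σ.toQuotient (r p)) (σ.toQuotient (r q))|
          = |ρ (r p) (r q) - σ (r p) (r q)| := by
            rw [← ρ.dist_toQuotient, hr, hr, Subtype.dist_eq, dist_toQuotient]
        _ ≤ ε := h _ _
  rw [ghDist] at hgh
  exact hgh.trans_eq (by ring)

theorem continuous_ghClass {H : Type*} [TopologicalSpace H] {ρ : H → ContinuousPseudoMetric K}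
    (hρ : Continuous fun p : H × K × K => ρ p.1 p.2.1 p.2.2) :
    Continuous fun h => (ρ h).ghClass := by
  let F : C(H, C(K × K, ℝ)) := ContinuousMap.curry ⟨_, hρ⟩
  refine continuous_iff_continuousAt.2 fun h₀ => tendsto_iff_dist_tendsto_zero.2 ?_
  have hF : Tendsto (fun h => 3 / 2 * dist (F h) (F h₀)) (𝓝 h₀) (𝓝 0) := by
    simpa using (tendsto_iff_dist_tendsto_zero.1 (F.continuous.tendsto h₀)).const_mul (3 / 2)
  exact squeeze_zero (fun _ => dist_nonneg)
    (fun h => dist_ghClass_le fun x y => (F h).dist_apply_le_dist (g := F h₀) (x, y)) hF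

end GromovHausdorff
end ContinuousPseudoMetric

section WeightedSum

variable {ι : Type*} {Y : ι → Type*} [∀ i, PseudoMetricSpace (Y i)] [∀ i, CompactSpace (Y i)]

theorem mul_dist_le_mul_diam_univ {w : ι → ℝ} (hw₀ : ∀ i, 0 ≤ w i) (x y : ∀ i, Y i) (i : ι) :
    w i * dist (x i) (y i) ≤ w i * diam (univ : Set (Y i)) :=
  mul_le_mul_of_nonneg_left
    (dist_le_diam_of_mem isBounded_of_compactSpace (mem_univ _) (mem_univ _)) (hw₀ i)

theorem summable_mul_dist {w : ι → ℝ} (hw₀ : ∀ i, 0 ≤ w i)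
    (hw : Summable fun i => w i * diam (univ : Set (Y i))) (x y : ∀ i, Y i) :
    Summable fun i => w i * dist (x i) (y i) :=
  hw.of_nonneg_of_le (fun i => mul_nonneg (hw₀ i) dist_nonneg) (mul_dist_le_mul_diam_univ hw₀ x y)

theorem continuous_tsum_mul_dist {H : Type*} [TopologicalSpace H] {w : H → ι → ℝ} {u : ι → ℝ}
    (hwcont : ∀ i, Continuous fun h => w h i) (hw₀ : ∀ h i, 0 ≤ w h i)
    (hwu : ∀ h i, w h i * diam (univ : Set (Y i)) ≤ u i) (hu : Summable u) :
    Continuous fun p : H × (∀ i, Y i) × (∀ i, Y i) =>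
      ∑' i, w p.1 i * dist (p.2.1 i) (p.2.2 i) := by
  refine continuous_tsum (fun i => ?_) hu fun i p => ?_
  · exact ((hwcont i).comp continuous_fst).mul (by fun_prop)
  · rw [Real.norm_of_nonneg (mul_nonneg (hw₀ _ i) dist_nonneg)]
    exact (mul_dist_le_mul_diam_univ (hw₀ p.1) _ _ i).trans (hwu p.1 i)

end WeightedSum

namespace ContinuousPseudoMetric

section Prod

variable {K L : Type*} [TopologicalSpace K] [TopologicalSpace L]

/-- The `ℓ¹`-product of two continuous pseudometrics. -/
def prod (ρ : ContinuousPseudoMetric K) (σ : ContinuousPseudoMetric L) :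
    ContinuousPseudoMetric (K × L) where
  toFun x y := ρ x.1 y.1 + σ x.2 y.2
  refl' x := by rw [ρ.refl', σ.refl', add_zero]
  symm' x y := by rw [ρ.symm', σ.symm']
  triangle' x y z := by linarith [ρ.triangle' x.1 y.1 z.1, σ.triangle' x.2 y.2 z.2]
  continuous' := (ρ.continuous'.comp (by fun_prop : Continuous fun p : (K × L) × K × L =>
    (p.1.1, p.2.1))).add (σ.continuous'.comp (by fun_prop : Continuous fun p : (K × L) × K × L =>
    (p.1.2, p.2.2)))

theorem prod_apply (ρ : ContinuousPseudoMetric K) (σ : ContinuousPseudoMetric L) (x y : K × L) :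
    ρ.prod σ x y = ρ x.1 y.1 + σ x.2 y.2 := rfl

theorem IsGeodesic.prod {ρ : ContinuousPseudoMetric K} {σ : ContinuousPseudoMetric L}
    (hρ : ρ.IsGeodesic) (hσ : σ.IsGeodesic) : (ρ.prod σ).IsGeodesic := by
  intro x y
  obtain ⟨γ, hγ₀, hγ₁, hγ⟩ := hρ x.1 y.1
  obtain ⟨δ, hδ₀, hδ₁, hδ⟩ := hσ x.2 y.2
  refine ⟨fun t => (γ t, δ t), Prod.ext hγ₀ hδ₀, Prod.ext hγ₁ hδ₁, fun s hs t ht => ?_⟩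
  rw [prod_apply, prod_apply, hγ s hs t ht, hδ s hs t ht, mul_add]

theorem continuous_prod {H : Type*} [TopologicalSpace H] {ρ : H → ContinuousPseudoMetric K}
    {σ : H → ContinuousPseudoMetric L} (hρ : Continuous fun p : H × K × K => ρ p.1 p.2.1 p.2.2)
    (hσ : Continuous fun p : H × L × L => σ p.1 p.2.1 p.2.2) :
    Continuous fun p : H × (K × L) × K × L => (ρ p.1).prod (σ p.1) p.2.1 p.2.2 :=
  (hρ.comp (by fun_prop : Continuous fun p : H × (K × L) × K × L =>
    (p.1, p.2.1.1, p.2.2.1))).add (hσ.comp (by fun_prop : Continuous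
      fun p : H × (K × L) × K × L => (p.1, p.2.1.2, p.2.2.2)))

theorem ghClass_prod_of_right_eq_zero [CompactSpace K] [Nonempty K] [CompactSpace L] [Nonempty L]
    (ρ : ContinuousPseudoMetric K) {σ : ContinuousPseudoMetric L} (hσ : ∀ x y, σ x y = 0) :
    (ρ.prod σ).ghClass = ρ.ghClass :=
  (ρ.prod σ).ghClass_eq_toGHSpace (ρ.surjective_toQuotient.comp Prod.fst_surjective) fun x y => by
    rw [prod_apply, hσ, add_zero]
    rfl

end Prod

section WeightedPi

variable {ι : Type*} {Y : ι → Type*} [∀ i, PseudoMetricSpace (Y i)] [∀ i, CompactSpace (Y i)]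
  {w : ι → ℝ}

/-- The weighted `ℓ¹`-pseudometric `∑ i, w i * dist (x i) (y i)` on a product of compact spaces.
The weight of a factor may vanish, which is what allows the factor to disappear in the metric
quotient. -/
noncomputable def weightedPi (w : ι → ℝ) (hw₀ : ∀ i, 0 ≤ w i)
    (hw : Summable fun i => w i * diam (univ : Set (Y i))) :
    ContinuousPseudoMetric (∀ i, Y i) where
  toFun x y := ∑' i, w i * dist (x i) (y i)
  refl' x := by simp
  symm' x y := by simp only [dist_comm]
  triangle' x y z := by
    have hsum := summable_mul_dist hw₀ hw
    rw [← (hsum x y).tsum_add (hsum y z)]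
    refine (hsum x z).tsum_le_tsum (fun i => ?_) ((hsum x y).add (hsum y z))
    rw [← mul_add]
    exact mul_le_mul_of_nonneg_left (dist_triangle _ _ _) (hw₀ i)
  continuous' := by
    have hcont := continuous_tsum_mul_dist (w := fun _ : Unit => w) (fun _ => continuous_const)
      (fun _ => hw₀) (fun _ _ => le_rfl) hw
    exact hcont.comp (Continuous.prodMk_right ())

variable {hw₀ : ∀ i, 0 ≤ w i} {hw : Summable fun i => w i * diam (univ : Set (Y i))}

theorem weightedPi_apply (x y : ∀ i, Y i) :
    weightedPi w hw₀ hw x y = ∑' i, w i * dist (x i) (y i) := rfl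

theorem weightedPi_apply_of_forall_ne {i : ι} {x y : ∀ i, Y i}
    (hxy : ∀ k ≠ i, w k * dist (x k) (y k) = 0) :
    weightedPi w hw₀ hw x y = w i * dist (x i) (y i) :=
  tsum_eq_single i hxy

theorem isGeodesic_weightedPi {Y : ι → Type*} [∀ i, MetricSpace (Y i)] [∀ i, CompactSpace (Y i)]
    {hw : Summable fun i => w i * diam (univ : Set (Y i))} (hY : ∀ i, IsGeodesicSpace (Y i)) :
    (weightedPi w hw₀ hw).IsGeodesic := by
  intro x y
  choose γ hγ₀ hγ₁ hγ using fun i => hY i (x i) (y i)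
  refine ⟨fun t i => γ i t, funext hγ₀, funext hγ₁, fun s hs t ht => ?_⟩
  simp only [weightedPi_apply, ← tsum_mul_left]
  refine tsum_congr fun i => ?_
  rw [hγ i s hs t ht]
  ring

theorem weightedPi_le_card_mul_dist {ι : Type*} [Fintype ι] {Y : ι → Type*}
    [∀ i, PseudoMetricSpace (Y i)] [∀ i, CompactSpace (Y i)] {w : ι → ℝ} {hw₀ : ∀ i, 0 ≤ w i}
    {hw : Summable fun i => w i * diam (univ : Set (Y i))} (hw₁ : ∀ i, w i ≤ 1)
    (x y : ∀ i, Y i) : weightedPi w hw₀ hw x y ≤ Fintype.card ι * dist x y := by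
  rw [weightedPi_apply, tsum_fintype, Fintype.card, ← nsmul_eq_mul]
  exact Finset.sum_le_card_nsmul _ _ _ fun i _ =>
    (mul_le_of_le_one_left dist_nonneg (hw₁ i)).trans (dist_le_pi_dist x y i)

theorem ghClass_weightedPi_of_eq_single [DecidableEq ι] {Y : ι → Type*} [∀ i, MetricSpace (Y i)]
    [∀ i, CompactSpace (Y i)] [∀ i, Nonempty (Y i)]
    {hw : Summable fun i => w i * diam (univ : Set (Y i))} {i : ι}
    (hwi : w = Pi.single i 1) : (weightedPi w hw₀ hw).ghClass = toGHSpace (Y i) := by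
  subst hwi
  refine (weightedPi _ hw₀ hw).ghClass_eq_toGHSpace (Function.surjective_eval i) fun x y => ?_
  rw [weightedPi_apply_of_forall_ne (i := i) fun k hk => by simp [hk]]
  simp

end WeightedPi

end ContinuousPseudoMetric

theorem exists_forall_fin_seq {α : Type*} {p : ∀ j : ℕ, (Fin j → α) → α → Prop}
    (h : ∀ j m, ∃ a, p j m a) : ∃ M : ℕ → α, ∀ j, p j (fun i => M i) (M j) := by
  choose g hg using h
  let M : ℕ → α := WellFoundedLT.fix fun j ih => g j fun i => ih i i.2
  have hM (j : ℕ) : M j = g j fun i => M i := WellFoundedLT.fix_eq _ j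
  exact ⟨M, fun j => hM j ▸ hg j _⟩

theorem exists_forall_fin_exists_dist_lt (Z : Type*) [PseudoMetricSpace Z] [CompactSpace Z] {ε : ℝ}
    (hε : 0 < ε) : ∃ N : ℕ, ∀ f : Fin N → Z, ∃ a b, a ≠ b ∧ dist (f a) (f b) < ε := by
  obtain ⟨t, -, ht, hcover⟩ := finite_cover_balls_of_compact (isCompact_univ (X := Z)) (half_pos hε)
  have := ht.fintype
  refine ⟨Fintype.card t + 1, fun f => ?_⟩
  have hcenter (z : Z) : ∃ c : t, z ∈ ball (c : Z) (ε / 2) := by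
    simpa using hcover (mem_univ z)
  choose c hc using fun a => hcenter (f a)
  obtain ⟨a, b, hab, hcab⟩ := Fintype.exists_ne_map_eq_of_card_lt c (by simp)
  refine ⟨a, b, hab, ?_⟩
  calc dist (f a) (f b) ≤ dist (f a) (c a) + dist (f b) (c a) := dist_triangle_right _ _ _
    _ < ε / 2 + ε / 2 := add_lt_add (hc a) (hcab ▸ hc b)
    _ = ε := add_halves ε

/-- The `N`-dimensional cube `[0, 1]^N` with the sup metric. -/
abbrev UnitCube (N : ℕ) : Type := Icc (0 : Fin N → ℝ) 1

namespace UnitCube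

variable {N : ℕ}

theorem isGeodesicSpace (N : ℕ) : IsGeodesicSpace (UnitCube N) :=
  isGeodesicSpace_of_convex (convex_Icc 0 1)

theorem dist_le_one (x y : UnitCube N) : dist x y ≤ 1 :=
  (dist_pi_le_iff zero_le_one).2 fun i =>
    Real.dist_le_of_mem_Icc_01 ⟨x.2.1 i, x.2.2 i⟩ ⟨y.2.1 i, y.2.2 i⟩

theorem diam_univ_le_one (N : ℕ) : diam (univ : Set (UnitCube N)) ≤ 1 :=
  diam_le_of_forall_dist_le zero_le_one fun x _ y _ => dist_le_one x y

theorem exists_pairwise_dist_eq_one (N : ℕ) :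
    ∃ e : Fin N → UnitCube N, Pairwise fun a b => dist (e a) (e b) = 1 := by
  refine ⟨fun a => ⟨Pi.single a 1, Pi.single_nonneg.2 zero_le_one, ?_⟩, fun a b hab => ?_⟩
  · exact update_le_iff.2 ⟨le_rfl, fun _ _ => zero_le_one⟩
  · refine (dist_le_one _ _).antisymm ?_
    rw [Subtype.dist_eq]
    simpa [hab] using dist_le_pi_dist (Pi.single a 1 : Fin N → ℝ) (Pi.single b 1) a

end UnitCube

/-- The dimensions `M` grow so fast that, for every `j`, any `M j` points of the product of `Z` with
the cubes preceding the `j`-th one include two at distance less than `ε j`. -/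
def DimensionsOutgrow (Z : Type*) [PseudoMetricSpace Z] (M : ℕ → ℕ) (ε : ℕ → ℝ) : Prop :=
  ∀ j, ∀ f : Fin (M j) → Z × ∀ i : Fin j, UnitCube (M i), ∃ a b, a ≠ b ∧ dist (f a) (f b) < ε j

theorem exists_dimensionsOutgrow (Z : Type*) [PseudoMetricSpace Z] [CompactSpace Z] {ε : ℕ → ℝ}
    (hε : ∀ j, 0 < ε j) : ∃ M, DimensionsOutgrow Z M ε :=
  exists_forall_fin_seq
    (p := fun j m n => ∀ f : Fin n → Z × ∀ i : Fin j, UnitCube (m i),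
      ∃ a b, a ≠ b ∧ dist (f a) (f b) < ε j)
    fun j m => exists_forall_fin_exists_dist_lt (Z × ∀ i : Fin j, UnitCube (m i)) (hε j)

/-- A sequence of positive numbers whose tails are eventually quadratically small compared to the
preceding term. -/
structure RapidlyDecaying (c : ℕ → ℝ) : Prop where
  pos : ∀ j, 0 < c j
  le_one : ∀ j, c j ≤ 1
  summable : Summable c
  eventually_tail_le : ∀ᶠ j in atTop, ∑' i, c (i + (j + 1)) ≤ c j ^ 2

theorem rapidlyDecaying_one_div_two_pow_factorial :
    RapidlyDecaying fun j => 1 / (2 : ℝ) ^ j.factorial := by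
  refine ⟨fun j => by positivity, fun j => ?_, LiouvilleNumber.summable one_lt_two, ?_⟩
  · exact div_le_one_of_le₀ (one_le_pow₀ one_le_two) (by positivity)
  · filter_upwards [eventually_ge_atTop 2] with j hj
    calc LiouvilleNumber.remainder 2 j ≤ (1 / (2 ^ j.factorial)) ^ j := by
          rw [one_div_pow]
          exact (LiouvilleNumber.remainder_lt j le_rfl).le
      _ ≤ (1 / 2 ^ j.factorial) ^ 2 := pow_le_pow_of_le_one (by positivity)
        (div_le_one_of_le₀ (one_le_pow₀ one_le_two) (by positivity)) hj

namespace ContinuousPseudoMetric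

theorem weightedPi_le_add_tsum {Y : ℕ → Type*} [∀ i, PseudoMetricSpace (Y i)]
    [∀ i, CompactSpace (Y i)] {w c : ℕ → ℝ} {hw₀ : ∀ i, 0 ≤ w i}
    {hw : Summable fun i => w i * diam (univ : Set (Y i))} (hY : ∀ i (x y : Y i), dist x y ≤ 1)
    (hwc : ∀ i, w i ≤ c i) (hc₁ : ∀ i, c i ≤ 1) (hc : Summable c) {j : ℕ} {δ : ℝ}
    {x y : ∀ i, Y i} (hxy : ∀ i < j, dist (x i) (y i) ≤ δ) :
    weightedPi w hw₀ hw x y ≤ j * δ + w j + ∑' i, c (i + (j + 1)) := by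
  have hsum := summable_mul_dist hw₀ hw x y
  rw [weightedPi_apply, ← hsum.sum_add_tsum_nat_add (j + 1), Finset.sum_range_succ]
  gcongr ?_ + ?_ + ?_
  · calc ∑ i ∈ Finset.range j, w i * dist (x i) (y i) ≤ ∑ _i ∈ Finset.range j, δ := by
          refine Finset.sum_le_sum fun i hi => ?_
          exact (mul_le_of_le_one_left dist_nonneg ((hwc i).trans (hc₁ i))).trans
            (hxy i (Finset.mem_range.1 hi))
      _ = j * δ := by simp
  · exact mul_le_of_le_one_right (hw₀ j) (hY j _ _)
  · refine ((summable_nat_add_iff _).2 hsum).tsum_le_tsum (fun i => ?_)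
      ((summable_nat_add_iff _).2 hc)
    exact (mul_le_of_le_one_right (hw₀ _) (hY _ _ _)).trans (hwc _)

variable {Z : Type*} [PseudoMetricSpace Z]

/-- The vertices of the `j`-th cube are too numerous to be spread out in `Z` and the preceding
cubes, so two of their images under `g` are separated almost entirely by the `j`-th and later
cubes. -/
theorem weight_le_of_map_eq [Nonempty Z] {M : ℕ → ℕ} {ε : ℕ → ℝ}
    (hM : DimensionsOutgrow Z M ε)
    {σ σ' : ContinuousPseudoMetric Z} {C : ℝ} (hC : 0 ≤ C) (hσ : ∀ x y, σ x y ≤ C * dist x y)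
    {w w' c : ℕ → ℝ} (hwc : ∀ i, w i ≤ c i) (hc₁ : ∀ i, c i ≤ 1) (hc : Summable c)
    {hw₀ : ∀ i, 0 ≤ w i} {hw₀' : ∀ i, 0 ≤ w' i}
    {hw : Summable fun i => w i * diam (univ : Set (UnitCube (M i)))}
    {hw' : Summable fun i => w' i * diam (univ : Set (UnitCube (M i)))}
    {g : (Z × ∀ i, UnitCube (M i)) → Z × ∀ i, UnitCube (M i)}
    (hg : ∀ x y, σ.prod (weightedPi w hw₀ hw) (g x) (g y) = σ'.prod (weightedPi w' hw₀' hw') x y)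
    (j : ℕ) : w' j ≤ (C + j) * ε j + w j + ∑' i, c (i + (j + 1)) := by
  obtain ⟨e, he⟩ := UnitCube.exists_pairwise_dist_eq_one (M j)
  let z : Z := Classical.arbitrary Z
  let x (a : Fin (M j)) : ∀ i, UnitCube (M i) := Function.update (fun _ => ⟨0, by simp⟩) j (e a)
  obtain ⟨a, b, hab, hlt⟩ := hM j fun a => ((g (z, x a)).1, fun i => (g (z, x a)).2 i)
  have hcore : dist (g (z, x a)).1 (g (z, x b)).1 ≤ ε j := (le_max_left _ _).trans hlt.le
  have hcubes (i : ℕ) (hi : i < j) : dist ((g (z, x a)).2 i) ((g (z, x b)).2 i) ≤ ε j :=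
    (dist_le_pi_dist (fun i : Fin j => (g (z, x a)).2 i) (fun i : Fin j => (g (z, x b)).2 i)
      ⟨i, hi⟩).trans ((le_max_right _ _).trans hlt.le)
  have hvertices : weightedPi w' hw₀' hw' (x a) (x b) = w' j := by
    rw [weightedPi_apply_of_forall_ne (i := j) fun k hk => by simp [x, hk]]
    simp [x, he hab]
  calc w' j = σ'.prod (weightedPi w' hw₀' hw') (z, x a) (z, x b) := by
        rw [prod_apply, σ'.refl', zero_add, hvertices]
    _ = σ (g (z, x a)).1 (g (z, x b)).1
        + weightedPi w hw₀ hw (g (z, x a)).2 (g (z, x b)).2 := (hg _ _).symm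
    _ ≤ C * ε j + (j * ε j + w j + ∑' i, c (i + (j + 1))) :=
        add_le_add ((hσ _ _).trans (mul_le_mul_of_nonneg_left hcore hC))
          (weightedPi_le_add_tsum (fun _ => UnitCube.dist_le_one) hwc hc₁ hc hcubes)
    _ = (C + j) * ε j + w j + ∑' i, c (i + (j + 1)) := by ring

end ContinuousPseudoMetric

/-- The weights `c j * φ k`, where `j` encodes the pair `(k, m)`: each coefficient `φ k` occurs
at arbitrarily small scales `c j`. -/
noncomputable def repeatedWeight (c φ : ℕ → ℝ) (j : ℕ) : ℝ := c j * φ j.unpair.1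

section RepeatedWeight

variable {c φ : ℕ → ℝ}

theorem repeatedWeight_nonneg (hc : ∀ j, 0 < c j) (hφ : ∀ k, φ k ∈ Icc (0 : ℝ) 1) (j : ℕ) :
    0 ≤ repeatedWeight c φ j :=
  mul_nonneg (hc j).le (hφ _).1

theorem repeatedWeight_le (hc : ∀ j, 0 < c j) (hφ : ∀ k, φ k ∈ Icc (0 : ℝ) 1) (j : ℕ) :
    repeatedWeight c φ j ≤ c j :=
  mul_le_of_le_one_right (hc j).le (hφ _).2

theorem repeatedWeight_mul_diam_unitCube_le (hc : ∀ j, 0 < c j) (hφ : ∀ k, φ k ∈ Icc (0 : ℝ) 1)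
    (M : ℕ → ℕ) (j : ℕ) : repeatedWeight c φ j * diam (univ : Set (UnitCube (M j))) ≤ c j :=
  (mul_le_of_le_one_right (repeatedWeight_nonneg hc hφ j) (UnitCube.diam_univ_le_one _)).trans
    (repeatedWeight_le hc hφ j)

theorem le_of_eventually_repeatedWeight_le {φ' : ℕ → ℝ} (hc : ∀ j, 0 < c j) (hcsum : Summable c)
    (h : ∀ᶠ j in atTop, repeatedWeight c φ' j ≤ repeatedWeight c φ j + 2 * c j ^ 2) : φ' ≤ φ := by
  intro k
  have hpair : Tendsto (fun m => Nat.pair k m) atTop atTop :=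
    tendsto_atTop_mono (Nat.right_le_pair k) tendsto_id
  have hlim : Tendsto (fun m => φ k + 2 * c (Nat.pair k m)) atTop (𝓝 (φ k)) := by
    simpa using ((hcsum.tendsto_atTop_zero.comp hpair).const_mul 2).const_add (φ k)
  refine ge_of_tendsto hlim ((hpair.eventually h).mono fun m hm => ?_)
  rw [repeatedWeight, repeatedWeight, Nat.unpair_pair] at hm
  exact le_of_mul_le_mul_left (hm.trans_eq (by ring)) (hc _)

end RepeatedWeight

theorem exists_separating_functions {H : Type*} [MetricSpace H] [SeparableSpace H]
    {V : Set H} (hV : IsClosed V) (hVne : V.Nonempty) :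
    ∃ φ : ℕ → H → ℝ, (∀ k, Continuous (φ k)) ∧ (∀ k h, φ k h ∈ Icc (0 : ℝ) 1) ∧
      (∀ k, ∀ h ∈ V, φ k h = 0) ∧ ∀ h h', (∀ k, φ k h = φ k h') → h = h' ∨ h ∈ V ∧ h' ∈ V := by
  have : Nonempty H := hVne.to_type
  let s (h : H) : ℝ := min 1 (infDist h V)
  let F (q h : H) : ℝ := s h * ((1 + min 1 (dist h q)) / 2)
  have hs₀ (h : H) : 0 ≤ s h := le_min zero_le_one infDist_nonneg
  have hs (h : H) : s h = 0 ↔ h ∈ V := by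
    rw [hV.mem_iff_infDist_zero hVne]
    refine ⟨fun h0 => ?_, fun h0 => by simp [s, h0]⟩
    exact (min_choice 1 (infDist h V)).elim (fun h1 => absurd (h0.symm.trans h1) zero_ne_one)
      fun h1 => h1.symm.trans h0
  refine ⟨fun k => F (denseSeq H k), fun k => by fun_prop, fun k h => ?_,
    fun k h hh => by simp only [F, (hs h).2 hh, zero_mul], fun h h' hhh' => ?_⟩
  · have hmin₀ : 0 ≤ min 1 (dist h (denseSeq H k)) := le_min zero_le_one dist_nonneg
    have hmin₁ : min 1 (dist h (denseSeq H k)) ≤ 1 := min_le_left _ _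
    exact ⟨mul_nonneg (hs₀ h) (by linarith),
      mul_le_one₀ (min_le_left _ _) (by linarith) (by linarith)⟩
  have hF (q : H) : F q h = F q h' :=
    congr_fun ((denseRange_denseSeq H).equalizer (g := (F · h)) (h := (F · h')) (by fun_prop)
      (by fun_prop) (funext hhh')) q
  have hFh : s h = s h' * (1 + min 1 (dist h h')) := by
    have := hF h
    simp only [F, dist_self, dist_comm h' h, min_eq_right zero_le_one] at this
    linarith
  have hFh' : s h' = s h * (1 + min 1 (dist h h')) := by
    have := hF h'
    simp only [F, dist_self, min_eq_right zero_le_one] at this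
    linarith
  rcases eq_or_ne h h' with heq | hne
  · exact .inl heq
  have hpos : 0 < min 1 (dist h h') := lt_min one_pos (dist_pos.2 hne)
  exact .inr ⟨(hs h).1 (by nlinarith [hs₀ h, hs₀ h']), (hs h').1 (by nlinarith [hs₀ h, hs₀ h'])⟩

namespace ContinuousPseudoMetric

theorem le_of_ghClass_eq {Z : Type*} [PseudoMetricSpace Z] [CompactSpace Z]
    [Nonempty Z] {M : ℕ → ℕ} {c : ℕ → ℝ} {C : ℝ} (hc : RapidlyDecaying c)
    (hM : DimensionsOutgrow Z M fun j => c j ^ 2 / (C + j + 1)) (hC : 0 ≤ C)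
    {σ σ' : ContinuousPseudoMetric Z} (hσ : ∀ x y, σ x y ≤ C * dist x y)
    {φ φ' : ℕ → ℝ} (hφ : ∀ k, φ k ∈ Icc (0 : ℝ) 1)
    {hw₀ : ∀ j, 0 ≤ repeatedWeight c φ j} {hw₀' : ∀ j, 0 ≤ repeatedWeight c φ' j}
    {hw : Summable fun j => repeatedWeight c φ j * diam (univ : Set (UnitCube (M j)))}
    {hw' : Summable fun j => repeatedWeight c φ' j * diam (univ : Set (UnitCube (M j)))}
    (h : (σ'.prod (weightedPi (repeatedWeight c φ') hw₀' hw')).ghClass =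
      (σ.prod (weightedPi (repeatedWeight c φ) hw₀ hw)).ghClass) : φ' ≤ φ := by
  obtain ⟨g, hg⟩ := exists_map_eq_of_ghClass_eq h
  refine le_of_eventually_repeatedWeight_le hc.pos hc.summable ?_
  filter_upwards [hc.eventually_tail_le] with j hj
  have hε : (C + j) * (c j ^ 2 / (C + j + 1)) ≤ c j ^ 2 := by
    rw [mul_div_left_comm]
    exact mul_le_of_le_one_right (by positivity)
      (div_le_one_of_le₀ (by linarith) (by positivity))
  have hwj :=
    weight_le_of_map_eq hM hC hσ (repeatedWeight_le hc.pos hφ) hc.le_one hc.summable hg j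
  linarith

theorem exists_continuous_geodesic_perturbation {H Z : Type*} [MetricSpace H]
    [SeparableSpace H] [PseudoMetricSpace Z] [CompactSpace Z] [Nonempty Z]
    {σ : H → ContinuousPseudoMetric Z} (hσ : Continuous fun p : H × Z × Z => σ p.1 p.2.1 p.2.2)
    (hgeo : ∀ h, (σ h).IsGeodesic) {C : ℝ} (hC : 0 ≤ C) (hσC : ∀ h x y, σ h x y ≤ C * dist x y)
    {V : Set H} (hV : IsClosed V) (hVne : V.Nonempty) :
    ∃ Φ : H → GHSpace, Continuous Φ ∧ (∀ h, IsGeodesicSpace (Φ h).Rep) ∧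
      (∀ h ∈ V, Φ h = (σ h).ghClass) ∧ ∀ h h', Φ h = Φ h' → h = h' ∨ h ∈ V ∧ h' ∈ V := by
  obtain ⟨φ, hφcont, hφ, hφV, hφsep⟩ := exists_separating_functions hV hVne
  obtain ⟨c, hc⟩ : ∃ c, RapidlyDecaying c := ⟨_, rapidlyDecaying_one_div_two_pow_factorial⟩
  obtain ⟨M, hM⟩ := exists_dimensionsOutgrow Z (ε := fun j => c j ^ 2 / (C + j + 1))
    fun j => div_pos (pow_pos (hc.pos j) 2) (by positivity)
  let w (h : H) : ℕ → ℝ := repeatedWeight c fun k => φ k h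
  have hw₀ (h : H) : ∀ j, 0 ≤ w h j := repeatedWeight_nonneg hc.pos fun k => hφ k h
  have hwle (h : H) : ∀ j, w h j * diam (univ : Set (UnitCube (M j))) ≤ c j :=
    repeatedWeight_mul_diam_unitCube_le hc.pos (fun k => hφ k h) M
  have hw (h : H) : Summable fun j => w h j * diam (univ : Set (UnitCube (M j))) :=
    hc.summable.of_nonneg_of_le (fun j => mul_nonneg (hw₀ h j) diam_nonneg) (hwle h)
  let τ (h : H) : ContinuousPseudoMetric (∀ j, UnitCube (M j)) := weightedPi (w h) (hw₀ h) (hw h)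
  have hτ : Continuous fun p : H × (∀ j, UnitCube (M j)) × (∀ j, UnitCube (M j)) =>
      τ p.1 p.2.1 p.2.2 :=
    continuous_tsum_mul_dist (fun j => (hφcont _).const_mul _) hw₀ hwle hc.summable
  have hle (h h' : H) (heq : ((σ h).prod (τ h)).ghClass = ((σ h').prod (τ h')).ghClass) (k : ℕ) :
      φ k h ≤ φ k h' :=
    le_of_ghClass_eq hc hM hC (hσC h') (fun k => hφ k h') heq k
  refine ⟨fun h => ((σ h).prod (τ h)).ghClass, continuous_ghClass (continuous_prod hσ hτ),
    fun h => ?_, fun h hh => ?_, fun h h' heq => ?_⟩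
  · exact ((hgeo h).prod (isGeodesic_weightedPi fun j =>
      UnitCube.isGeodesicSpace (M j))).isGeodesicSpace_rep_ghClass
  · have hwh (j : ℕ) : w h j = 0 := by simp only [w, repeatedWeight, hφV _ h hh, mul_zero]
    refine (σ h).ghClass_prod_of_right_eq_zero fun x y => ?_
    simp only [τ, weightedPi_apply, hwh, zero_mul, tsum_zero]
  · exact hφsep h h' fun k => (hle h h' heq k).antisymm (hle h' h heq.symm k)

theorem exists_continuous_eq_pi_single {H ι : Type*} [TopologicalSpace H] [NormalSpace H]
    [T1Space H] [Finite ι] [DecidableEq ι] {v : ι → H} (hv : Function.Injective v) :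
    ∃ a : ι → C(H, ℝ), (∀ i h, a i h ∈ Icc (0 : ℝ) 1) ∧
      ∀ j, (fun i => a i (v j)) = Pi.single j 1 := by
  have hurysohn (i : ι) := exists_continuous_zero_one_of_isClosed
    ((toFinite (v '' {i}ᶜ)).isClosed) (isClosed_singleton (x := v i)) (by simp [hv.eq_iff])
  choose a ha₀ ha₁ ha using hurysohn
  refine ⟨a, ha, fun j => funext fun i => ?_⟩
  rcases eq_or_ne i j with rfl | hij
  · simpa using ha₁ i rfl
  · simpa [hij] using ha₀ i ⟨j, hij.symm, rfl⟩

theorem exists_interpolating_pseudoMetrics {H ι : Type*} [TopologicalSpace H] [NormalSpace H]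
    [T1Space H] [Fintype ι] {v : ι → H} (hv : Function.Injective v) {X : ι → Type*}
    [∀ i, MetricSpace (X i)] [∀ i, CompactSpace (X i)] [∀ i, Nonempty (X i)]
    (hgeo : ∀ i, IsGeodesicSpace (X i)) :
    ∃ σ : H → ContinuousPseudoMetric (∀ i, X i),
      (Continuous fun p : H × (∀ i, X i) × (∀ i, X i) => σ p.1 p.2.1 p.2.2) ∧
      (∀ h, (σ h).IsGeodesic) ∧ (∀ h x y, σ h x y ≤ Fintype.card ι * dist x y) ∧
      ∀ i, (σ (v i)).ghClass = toGHSpace (X i) := by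
  classical
  obtain ⟨a, ha, hav⟩ := exists_continuous_eq_pi_single hv
  refine ⟨fun h => .weightedPi (fun i => a i h) (fun i => (ha i h).1) .of_finite, ?_,
    fun h => isGeodesic_weightedPi hgeo,
    fun h => weightedPi_le_card_mul_dist fun i => (ha i h).2,
    fun i => ghClass_weightedPi_of_eq_single (hav i)⟩
  exact continuous_tsum_mul_dist (fun i => (a i).continuous) (fun h i => (ha i h).1)
    (fun h i => mul_le_of_le_one_left diam_nonneg (ha i h).2) .of_finite

end ContinuousPseudoMetric

/-- Let `H` be a compact metrizable space, `n ≥ 1`, and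
`v 0, …, v n` be `n+1` distinct points of `H`.  Let `X 0, …, X n` be compact
geodesic (nonempty) metric spaces with positive pairwise Gromov–Hausdorff
distances.  Then there is a topological embedding `Φ` of `H` into the subset
`𝒢` of the Gromov–Hausdorff space consisting of compact geodesic metric
spaces such that `Φ (v i)` is the isometry class of `X i`. -/
theorem statement2 {H : Type*} [TopologicalSpace H] [CompactSpace H]
    [TopologicalSpace.MetrizableSpace H]
    (n : ℕ) (hn : 1 ≤ n) (v : Fin (n + 1) → H) (hv : Function.Injective v)
    (X : Fin (n + 1) → Type) [∀ i, MetricSpace (X i)] [∀ i, CompactSpace (X i)]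
    [∀ i, Nonempty (X i)]
    (hgeo : ∀ i, IsGeodesicSpace (X i))
    (hdist : ∀ i j, i ≠ j → 0 < ghDist (X i) (X j)) :
    ∃ Φ : H → GHSpace,
      Topology.IsEmbedding Φ ∧
      (∀ h : H, IsGeodesicSpace (Φ h).Rep) ∧
      ∀ i, Φ (v i) = toGHSpace (X i) := by
  let _ : MetricSpace H := TopologicalSpace.metrizableSpaceMetric H
  obtain ⟨σ, hσ, hσgeo, hσdist, hσv⟩ :=
    ContinuousPseudoMetric.exists_interpolating_pseudoMetrics hv hgeo
  obtain ⟨Φ, hΦ, hΦgeo, hΦv, hΦinj⟩ :=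
    ContinuousPseudoMetric.exists_continuous_geodesic_perturbation hσ hσgeo (Nat.cast_nonneg _)
      hσdist (finite_range v).isClosed (range_nonempty v)
  have hΦX (i : Fin (n + 1)) : Φ (v i) = toGHSpace (X i) :=
    (hΦv (v i) (mem_range_self i)).trans (hσv i)
  have hinj : Function.Injective Φ := by
    intro h h' heq
    rcases hΦinj h h' heq with rfl | ⟨⟨i, rfl⟩, ⟨j, rfl⟩⟩
    · rfl
    · rw [hΦX, hΦX] at heq
      by_contra hij
      refine (hdist i j (ne_of_apply_ne v hij)).ne' ?_
      rw [ghDist, heq, dist_self]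
  exact ⟨Φ, (hΦ.isClosedEmbedding hinj).isEmbedding, hΦgeo, hΦX⟩
end
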